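/- arXiv:2604.02357 — 4 statements merged into one kernel-verified Lean document; each statement's English description precedes it below -/
import Mathlib

section
/- Let n ≥ 1, s ∈ (0,1) and ε > 0. Suppose φ : ℝⁿ → ℝ is continuous, vanishes at infinity, and φ(y) = 0 for all y with |y| ≤ ε. If ∫_{ℝⁿ} φ(y) · |y − x|^{-(n+2s)} dy = 0 for every x ∈ ℝⁿ with |x| < ε (these integrals converge absolutely since φ is bounded, vanishes near x, and n + 2s > n), then φ = 0 everywhere on ℝⁿ. (This is the dual form of the unique continuation principle for the fractional Laplacian (−Δ)^s, equivalently M. Riesz's theorem.) -/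
open MeasureTheory Filter

/-- The kernel `w ↦ ⟪v, w⟫ ^ m * ‖w‖ ^ (-b)`. -/
noncomputable def rieszMonomial {E : Type*} [NormedAddCommGroup E] [InnerProductSpace ℝ E]
    (v : E) (m : ℕ) (b : ℝ) (w : E) : ℝ :=
  inner ℝ v w ^ m * ‖w‖ ^ (-b)

section Norm

variable {E : Type*} [SeminormedAddCommGroup E]

theorem one_add_norm_le_mul_norm_sub {ε δ : ℝ} (hδ : 0 < δ) {x y : E} (hx : ‖x‖ + δ ≤ ε)
    (hy : ε ≤ ‖y‖) : 1 + ‖y‖ ≤ (ε + 1) / δ * ‖y - x‖ := by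
  have h := norm_sub_norm_le y x
  have hx0 := norm_nonneg x
  rw [div_mul_eq_mul_div, le_div_iff₀ hδ]
  nlinarith [mul_nonneg (sub_nonneg.2 hy) (by linarith : (0 : ℝ) ≤ ε + 1 - δ)]

theorem norm_sub_rpow_neg_le {ε δ c : ℝ} (hδ : 0 < δ) (hc : 0 ≤ c) {x y : E}
    (hx : ‖x‖ + δ ≤ ε) (hy : ε ≤ ‖y‖) :
    ‖y - x‖ ^ (-c) ≤ ((ε + 1) / δ) ^ c * (1 + ‖y‖) ^ (-c) := by
  have hx0 := norm_nonneg x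
  have hy0 := norm_nonneg y
  have hA : 0 < (ε + 1) / δ := by
    apply div_pos _ hδ
    linarith
  have h := one_add_norm_le_mul_norm_sub hδ hx hy
  have h1 : (1 + ‖y‖) / ((ε + 1) / δ) ≤ ‖y - x‖ := by
    rwa [div_le_iff₀ hA, mul_comm]
  calc ‖y - x‖ ^ (-c) ≤ ((1 + ‖y‖) / ((ε + 1) / δ)) ^ (-c) :=
        Real.rpow_le_rpow_of_nonpos (by positivity) h1 (by linarith)
    _ = _ := by
        rw [Real.div_rpow (by positivity) hA.le, Real.rpow_neg hA.le, div_inv_eq_mul, mul_comm]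

end Norm

section Kernel

variable {E : Type*} [NormedAddCommGroup E] [InnerProductSpace ℝ E]

theorem abs_rieszMonomial_le (v : E) (m : ℕ) (b : ℝ) {w : E} (hw : w ≠ 0) :
    |rieszMonomial v m b w| ≤ ‖v‖ ^ m * ‖w‖ ^ (-(b - m)) := by
  have hw' : 0 < ‖w‖ := norm_pos_iff.2 hw
  have h : ‖w‖ ^ (-(b - m)) = ‖w‖ ^ m * ‖w‖ ^ (-b) := by
    rw [← Real.rpow_natCast, ← Real.rpow_add hw']
    ring_nf
  rw [rieszMonomial, abs_mul, abs_pow, abs_of_nonneg (Real.rpow_nonneg hw'.le _), h, ← mul_assoc,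
    ← mul_pow]
  gcongr
  exact abs_real_inner_le_norm v w

theorem hasDerivAt_rieszMonomial_line (v : E) (m : ℕ) (b : ℝ) (x y : E) {t : ℝ}
    (hw : y - (x + t • v) ≠ 0) :
    HasDerivAt (fun t : ℝ ↦ rieszMonomial v m b (y - (x + t • v)))
      (b * rieszMonomial v (m + 1) (b + 2) (y - (x + t • v))
        - m * (‖v‖ ^ 2 * rieszMonomial v (m - 1) b (y - (x + t • v)))) t := by
  have hline : HasDerivAt (fun t : ℝ ↦ y - (x + t • v)) (-v) t := by
    simpa using (((hasDerivAt_id t).smul_const v).const_add x).const_sub y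
  have hw' : 0 < ‖y - (x + t • v)‖ := norm_pos_iff.2 hw
  have hinner := ((hasDerivAt_const t v).inner ℝ hline).pow m
  have hnorm := hline.norm_sq.rpow_const (p := -b / 2) (Or.inl (pow_pos hw' 2).ne')
  have key : ∀ (z : E) (c : ℝ), (‖z‖ ^ 2) ^ (c / 2) = ‖z‖ ^ c := fun z c ↦ by
    rw [← Real.rpow_natCast, ← Real.rpow_mul (norm_nonneg z)]
    congr 1
    push_cast
    ring
  have hexp : -b / 2 - 1 = -(b + 2) / 2 := by ring
  rw [hexp] at hnorm
  simp only [key] at hnorm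
  refine (hinner.mul hnorm).congr_deriv ?_
  simp only [rieszMonomial, inner_neg_right, real_inner_self_eq_norm_sq, inner_zero_left, add_zero,
    real_inner_comm v, Pi.pow_apply]
  ring

theorem sum_rieszMonomial_two {ι : Type*} [Fintype ι] (e : OrthonormalBasis ι ℝ E) (b : ℝ)
    {w : E} (hw : w ≠ 0) :
    ∑ i, rieszMonomial (e i) 2 (b + 2) w = rieszMonomial 0 0 b w := by
  have hw' : 0 < ‖w‖ := norm_pos_iff.2 hw
  simp only [rieszMonomial, ← Finset.sum_mul, e.sum_sq_inner_right, pow_zero, one_mul]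
  rw [← Real.rpow_natCast, ← Real.rpow_add hw']
  congr 1
  push_cast
  ring

theorem measurable_rieszMonomial [MeasurableSpace E] [BorelSpace E]
    (v : E) (m : ℕ) (b : ℝ) : Measurable (rieszMonomial v m b) := by
  unfold rieszMonomial
  have : Continuous fun w : E ↦ inner ℝ v w := by fun_prop
  exact (this.measurable.pow_const m).mul (measurable_norm.pow_const _)


end Kernel

section Annihilator

variable {E : Type*} [NormedAddCommGroup E] [InnerProductSpace ℝ E] [FiniteDimensional ℝ E]
  [MeasurableSpace E] [BorelSpace E] {μ : Measure E} [μ.IsAddHaarMeasure]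
  {φ : E → ℝ} {ε M : ℝ}

theorem integrable_mul_rieszMonomial (hφ : AEStronglyMeasurable φ μ) (hM : ∀ y, |φ y| ≤ M)
    (hvan : ∀ y, ‖y‖ ≤ ε → φ y = 0) (v : E) {m : ℕ} {b : ℝ}
    (hb : (Module.finrank ℝ E : ℝ) < b - m) {x : E} (hx : ‖x‖ < ε) :
    Integrable (fun y ↦ φ y * rieszMonomial v m b (y - x)) μ := by
  have hc : 0 ≤ b - m := (Nat.cast_nonneg _).trans hb.le
  have hM0 : 0 ≤ M := (abs_nonneg _).trans (hM 0)
  have hε : 0 < ε := (norm_nonneg x).trans_lt hx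
  have hδ : 0 < ε - ‖x‖ := sub_pos.2 hx
  refine ((integrable_one_add_norm hb).const_mul
    (M * (‖v‖ ^ m * ((ε + 1) / (ε - ‖x‖)) ^ (b - m)))).mono'
    (hφ.mul ((measurable_rieszMonomial v m b).comp
      (measurable_sub_const x)).aestronglyMeasurable) (Eventually.of_forall fun y ↦ ?_)
  rcases le_or_gt ‖y‖ ε with hy | hy
  · rw [hvan y hy, zero_mul, norm_zero]
    positivity
  · have hyx : y - x ≠ 0 := by
      rintro h
      rw [sub_eq_zero.1 h] at hy
      exact absurd hx hy.not_gt
    rw [Real.norm_eq_abs, abs_mul, mul_assoc M, mul_assoc (‖v‖ ^ m)]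
    gcongr
    · exact hM y
    · refine (abs_rieszMonomial_le v m b hyx).trans ?_
      gcongr
      exact norm_sub_rpow_neg_le hδ hc (by simp) hy.le

/-- Differentiating under the integral sign along `v`. -/
theorem integral_mul_rieszMonomial_succ (hφ : AEStronglyMeasurable φ μ) (hM : ∀ y, |φ y| ≤ M)
    (hvan : ∀ y, ‖y‖ ≤ ε → φ y = 0) (v : E) {m : ℕ} {b : ℝ}
    (hb : (Module.finrank ℝ E : ℝ) < b - m)
    (h : ∀ x, ‖x‖ < ε → ∫ y, φ y * rieszMonomial v m b (y - x) ∂μ = 0) {x : E} (hx : ‖x‖ < ε) :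
    b * ∫ y, φ y * rieszMonomial v (m + 1) (b + 2) (y - x) ∂μ
      = m * ‖v‖ ^ 2 * ∫ y, φ y * rieszMonomial v (m - 1) b (y - x) ∂μ := by
  have hM0 : 0 ≤ M := (abs_nonneg _).trans (hM 0)
  have hε : 0 < ε := (norm_nonneg x).trans_lt hx
  have hb0 : 0 ≤ b := by
    have : (0 : ℝ) ≤ Module.finrank ℝ E := Nat.cast_nonneg _
    have : (0 : ℝ) ≤ m := Nat.cast_nonneg _
    linarith
  have hc : (Module.finrank ℝ E : ℝ) < b - m + 1 := by linarith
  have hc0 : 0 ≤ b - m + 1 := (Nat.cast_nonneg _).trans hc.le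
  obtain ⟨δ, hδ, hxδ⟩ : ∃ δ, 0 < δ ∧ ‖x‖ + δ < ε :=
    ⟨(ε - ‖x‖) / 2, by linarith, by linarith⟩
  have hs : {t : ℝ | ‖x + t • v‖ + δ < ε} ∈ nhds (0 : ℝ) := by
    refine IsOpen.mem_nhds (isOpen_lt (by fun_prop) (by fun_prop)) ?_
    simpa using hxδ
  have hmeas (m : ℕ) (b : ℝ) (x : E) :
      AEStronglyMeasurable (fun y ↦ rieszMonomial v m b (y - x)) μ :=
    ((measurable_rieszMonomial v m b).comp (measurable_sub_const x)).aestronglyMeasurable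
  set A := ((ε + 1) / δ) ^ (b - m + 1)
  have hA0 : 0 ≤ A := by positivity
  have hne {z y : E} (hz : ‖z‖ + δ < ε) (hy : ε < ‖y‖) : y - z ≠ 0 := by
    intro h0
    rw [sub_eq_zero.1 h0] at hy
    linarith
  have hderiv := (hasDerivAt_integral_of_dominated_loc_of_deriv_le (μ := μ) (x₀ := (0 : ℝ))
    (F := fun t y ↦ φ y * rieszMonomial v m b (y - (x + t • v)))
    (F' := fun t y ↦ φ y * (b * rieszMonomial v (m + 1) (b + 2) (y - (x + t • v))
        - m * (‖v‖ ^ 2 * rieszMonomial v (m - 1) b (y - (x + t • v)))))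
    (bound := fun y ↦ M * ((b * ‖v‖ ^ (m + 1) + m * (‖v‖ ^ 2 * ‖v‖ ^ (m - 1))) * A)
      * (1 + ‖y‖) ^ (-(b - m + 1))) hs
    (Eventually.of_forall fun t ↦ hφ.mul (hmeas _ _ _))
    (by simpa using integrable_mul_rieszMonomial hφ hM hvan v hb hx)
    (hφ.mul (((hmeas _ _ _).const_mul _).sub (((hmeas _ _ _).const_mul _).const_mul _)))
    (Eventually.of_forall fun y t ht ↦ ?_)
    ((integrable_one_add_norm hc).const_mul _)
    (Eventually.of_forall fun y t ht ↦ ?_)).2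
  · have h0 : (fun t : ℝ ↦ ∫ y, φ y * rieszMonomial v m b (y - (x + t • v)) ∂μ)
        =ᶠ[nhds 0] fun _ ↦ 0 := by
      filter_upwards [hs] with t ht
      exact h _ (by linarith [Set.mem_ofPred.1 ht])
    have h1 := hderiv.unique ((hasDerivAt_const (0 : ℝ) (0 : ℝ)).congr_of_eventuallyEq h0)
    simp only [zero_smul, add_zero] at h1
    have hi1 := integrable_mul_rieszMonomial hφ hM hvan v (m := m + 1) (b := b + 2)
      (by push_cast; linarith) hx
    have hi2 : Integrable (fun y ↦ φ y * rieszMonomial v (m - 1) b (y - x)) μ := by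
      refine integrable_mul_rieszMonomial hφ hM hvan v (hb.trans_le ?_) hx
      gcongr
      exact m.sub_le 1
    have h2 : ∀ y, φ y * (b * rieszMonomial v (m + 1) (b + 2) (y - x)
        - m * (‖v‖ ^ 2 * rieszMonomial v (m - 1) b (y - x)))
        = b * (φ y * rieszMonomial v (m + 1) (b + 2) (y - x))
          - m * ‖v‖ ^ 2 * (φ y * rieszMonomial v (m - 1) b (y - x)) := fun y ↦ by ring
    simp only [h2] at h1
    rw [integral_sub (hi1.const_mul _) (hi2.const_mul _), integral_const_mul,
      integral_const_mul] at h1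
    exact sub_eq_zero.1 h1
  · rcases le_or_gt ‖y‖ ε with hy | hy
    · rw [hvan y hy, zero_mul, norm_zero]
      positivity
    have hw := hne ht hy
    have hle := norm_sub_rpow_neg_le hδ hc0 (Set.mem_ofPred.1 ht).le hy.le
    have h1 : |rieszMonomial v (m + 1) (b + 2) (y - (x + t • v))|
        ≤ ‖v‖ ^ (m + 1) * (A * (1 + ‖y‖) ^ (-(b - m + 1))) := by
      refine (abs_rieszMonomial_le v _ _ hw).trans ?_
      gcongr
      refine (le_of_eq ?_).trans hle
      congr 1
      push_cast
      ring
    have h2 : m * (‖v‖ ^ 2 * |rieszMonomial v (m - 1) b (y - (x + t • v))|)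
        ≤ m * (‖v‖ ^ 2 * (‖v‖ ^ (m - 1) * (A * (1 + ‖y‖) ^ (-(b - m + 1))))) := by
      rcases m.eq_zero_or_pos with rfl | hm
      · simp
      gcongr
      refine (abs_rieszMonomial_le v _ _ hw).trans ?_
      gcongr
      refine (le_of_eq ?_).trans hle
      congr 1
      rw [Nat.cast_sub hm]
      push_cast
      ring
    rw [Real.norm_eq_abs, abs_mul, mul_assoc M]
    gcongr
    · exact hM y
    · refine (abs_sub _ _).trans ?_
      rw [abs_mul, abs_mul, abs_mul, abs_of_nonneg hb0, Nat.abs_cast,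
        abs_of_nonneg (sq_nonneg ‖v‖)]
      refine (add_le_add (mul_le_mul_of_nonneg_left h1 hb0) h2).trans_eq ?_
      ring
  · rcases le_or_gt ‖y‖ ε with hy | hy
    · simpa [hvan y hy] using hasDerivAt_const t (0 : ℝ)
    · exact (hasDerivAt_rieszMonomial_line v m b x y (hne ht hy)).const_mul _

/-- If `φ` annihilates the translates of `‖·‖ ^ (-b)`, it annihilates those of their Laplacians,
which are multiples of the translates of `‖·‖ ^ (-(b + 2))`. -/
theorem integral_mul_rieszMonomial_zero_add_two (hφ : AEStronglyMeasurable φ μ)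
    (hM : ∀ y, |φ y| ≤ M) (hvan : ∀ y, ‖y‖ ≤ ε → φ y = 0) {b : ℝ}
    (hb : (Module.finrank ℝ E : ℝ) < b)
    (h : ∀ x, ‖x‖ < ε → ∫ y, φ y * rieszMonomial 0 0 b (y - x) ∂μ = 0) {x : E} (hx : ‖x‖ < ε) :
    ∫ y, φ y * rieszMonomial 0 0 (b + 2) (y - x) ∂μ = 0 := by
  have hb0 : 0 < b := (Nat.cast_nonneg _).trans_lt hb
  let e := stdOrthonormalBasis ℝ E
  have hv (v : E) (b : ℝ) : rieszMonomial v 0 b = rieszMonomial 0 0 b := by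
    ext
    simp [rieszMonomial]
  have h1 (v x : E) (hx : ‖x‖ < ε) :
      ∫ y, φ y * rieszMonomial v 1 (b + 2) (y - x) ∂μ = 0 := by
    have := integral_mul_rieszMonomial_succ hφ hM hvan v (m := 0) (b := b) (by simpa using hb)
      (by simpa only [hv] using h) hx
    simpa [hb0.ne'] using this
  have h2 (i) : (b + 2) * ∫ y, φ y * rieszMonomial (e i) 2 (b + 4) (y - x) ∂μ
      = ∫ y, φ y * rieszMonomial 0 0 (b + 2) (y - x) ∂μ := by
    have := integral_mul_rieszMonomial_succ hφ hM hvan (e i) (m := 1) (b := b + 2)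
      (by push_cast; linarith) (h1 _) hx
    simpa [hv, add_assoc, show (2 : ℝ) + 2 = 4 by norm_num] using this
  have h3 : ∑ i, ∫ y, φ y * rieszMonomial (e i) 2 (b + 4) (y - x) ∂μ
      = ∫ y, φ y * rieszMonomial 0 0 (b + 2) (y - x) ∂μ := by
    rw [← integral_finsetSum _ fun i _ ↦ integrable_mul_rieszMonomial hφ hM hvan _
      (by push_cast; linarith) hx]
    refine integral_congr_ae (Eventually.of_forall fun y ↦ ?_)
    rcases le_or_gt ‖y‖ ε with hy | hy
    · simp [hvan y hy]
    · have hyx : y - x ≠ 0 := by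
        rintro h
        rw [sub_eq_zero.1 h] at hy
        exact absurd hx hy.not_gt
      dsimp only
      rw [← Finset.mul_sum, ← sum_rieszMonomial_two e _ hyx, add_assoc]
      norm_num
  have h4 : (b + 2) * ∫ y, φ y * rieszMonomial 0 0 (b + 2) (y - x) ∂μ
      = Module.finrank ℝ E * ∫ y, φ y * rieszMonomial 0 0 (b + 2) (y - x) ∂μ := by
    nth_rw 1 [← h3]
    rw [Finset.mul_sum]
    simp [h2]
  rcases mul_eq_mul_right_iff.1 h4 with h5 | h5
  · linarith
  · exact h5

theorem integral_mul_rieszMonomial_eq_zero (hφ : AEStronglyMeasurable φ μ)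
    (hM : ∀ y, |φ y| ≤ M) (hvan : ∀ y, ‖y‖ ≤ ε → φ y = 0) {a : ℝ}
    (ha : (Module.finrank ℝ E : ℝ) < a)
    (h : ∀ x, ‖x‖ < ε → ∫ y, φ y * ‖y - x‖ ^ (-a) ∂μ = 0) (v : E) (m k : ℕ) {x : E}
    (hx : ‖x‖ < ε) :
    ∫ y, φ y * rieszMonomial v m (a + 2 * (m + k)) (y - x) ∂μ = 0 := by
  have hstep (m k : ℕ) {x : E} (hx : ‖x‖ < ε)
      (h1 : ∀ x, ‖x‖ < ε → ∫ y, φ y * rieszMonomial v m (a + 2 * (m + k)) (y - x) ∂μ = 0)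
      (h2 : (m : ℝ) * ∫ y, φ y * rieszMonomial v (m - 1) (a + 2 * (m + k)) (y - x) ∂μ = 0) :
      ∫ y, φ y * rieszMonomial v (m + 1) (a + 2 * ((m + 1 : ℕ) + k)) (y - x) ∂μ = 0 := by
    have hm : (0 : ℝ) ≤ m := Nat.cast_nonneg _
    have hk : (0 : ℝ) ≤ k := Nat.cast_nonneg _
    have hn : (0 : ℝ) ≤ Module.finrank ℝ E := Nat.cast_nonneg _
    have h3 := integral_mul_rieszMonomial_succ hφ hM hvan v (by linarith) h1 hx
    rw [mul_right_comm, h2, zero_mul,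
      show a + 2 * ((m : ℝ) + k) + 2 = a + 2 * ((m + 1 : ℕ) + k) by push_cast; ring] at h3
    exact (mul_eq_zero.1 h3).resolve_left (by linarith)
  have hbase (k : ℕ) : ∀ x, ‖x‖ < ε →
      ∫ y, φ y * rieszMonomial v 0 (a + 2 * ((0 : ℕ) + k)) (y - x) ∂μ = 0 := by
    have h0 : ∀ x, ‖x‖ < ε → ∫ y, φ y * rieszMonomial 0 0 (a + 2 * k) (y - x) ∂μ = 0 := by
      induction k with
      | zero => simpa [rieszMonomial] using h
      | succ k ih =>
        intro x hx
        have hk : (0 : ℝ) ≤ k := Nat.cast_nonneg _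
        have := integral_mul_rieszMonomial_zero_add_two hφ hM hvan (by linarith) ih hx
        rwa [show a + 2 * (k : ℝ) + 2 = a + 2 * (k + 1 : ℕ) by push_cast; ring] at this
    simpa [rieszMonomial] using h0
  induction m using Nat.twoStepInduction generalizing k x with
  | zero => exact hbase k x hx
  | one => exact hstep 0 k hx (hbase k) (by simp)
  | more m ih0 ih1 =>
    refine hstep (m + 1) k hx (fun x hx ↦ ih1 k hx) ?_
    have := ih0 (k + 1) hx
    rw [show a + 2 * ((m : ℝ) + (k + 1 : ℕ)) = a + 2 * ((m + 1 : ℕ) + k) by push_cast; ring]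
      at this
    rw [Nat.add_sub_cancel, this, mul_zero]

end Annihilator

section Moments

variable {X F : Type*} [MeasurableSpace X] [NormedAddCommGroup F] [InnerProductSpace ℝ F]
  [MeasurableSpace F] [BorelSpace F] {μ : Measure X}

open Complex in
/-- If all moments of a compactly supported signed measure vanish, so does its Fourier transform. -/
theorem integral_mul_exp_inner_eq_zero {h : X → ℝ} (hh : Integrable h μ) {z : X → F}
    (hz : Measurable z) {R : ℝ} (hR : ∀ y, h y ≠ 0 → ‖z y‖ ≤ R)
    (hmom : ∀ (v : F) (m : ℕ), ∫ y, h y * inner ℝ v (z y) ^ m ∂μ = 0) (v : F) :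
    ∫ y, (h y : ℂ) * exp (inner ℝ (z y) v * I) ∂μ = 0 := by
  have hinner : Measurable fun y ↦ inner ℝ v (z y) :=
    (by fun_prop : Continuous fun w : F ↦ inner ℝ v w).measurable.comp hz
  have hsum := hasSum_integral_of_dominated_convergence (μ := μ)
    (F := fun (m : ℕ) y ↦ (h y : ℂ) * ((m.factorial : ℂ)⁻¹ * (inner ℝ v (z y) * I) ^ m))
    (f := fun y ↦ (h y : ℂ) * exp (inner ℝ (z y) v * I))
    (fun (m : ℕ) y ↦ |h y| * ((m.factorial : ℝ)⁻¹ * (‖v‖ * R) ^ m))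
    (fun m ↦ ?_) (fun m ↦ Eventually.of_forall fun y ↦ ?_)
    (Eventually.of_forall fun y ↦ ?_) ?_ (Eventually.of_forall fun y ↦ ?_)
  · have hzero (m : ℕ) :
        ∫ y, (h y : ℂ) * ((m.factorial : ℂ)⁻¹ * (inner ℝ v (z y) * I) ^ m) ∂μ = 0 := by
      have h1 : ∀ y, (h y : ℂ) * ((m.factorial : ℂ)⁻¹ * (inner ℝ v (z y) * I) ^ m)
          = ((m.factorial : ℂ)⁻¹ * I ^ m) * ((h y * inner ℝ v (z y) ^ m : ℝ) : ℂ) := fun y ↦ by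
        push_cast
        ring
      simp only [h1]
      rw [integral_const_mul, integral_complex_ofReal, hmom]
      simp
    simp only [hzero] at hsum
    exact hsum.unique hasSum_zero
  · refine (continuous_ofReal.comp_aestronglyMeasurable hh.1).mul ?_
    exact (((measurable_ofReal.comp hinner).mul_const I).pow_const m |>.const_mul
      _).aestronglyMeasurable
  · simp only [norm_mul, norm_inv, norm_pow, norm_real, norm_I, mul_one, Real.norm_eq_abs,
      Complex.norm_natCast]
    by_cases hy : h y = 0
    · simp [hy]
    gcongr
    exact (abs_real_inner_le_norm v (z y)).trans (by gcongr; exact hR y hy)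
  · refine Summable.mul_left _ ?_
    simpa [div_eq_inv_mul] using Real.summable_pow_div_factorial (‖v‖ * R)
  · simp only [tsum_mul_left]
    exact hh.abs.mul_const _
  · refine HasSum.mul_left _ ?_
    rw [exp_eq_exp_ℂ, real_inner_comm v]
    simpa [smul_eq_mul] using NormedSpace.exp_series_hasSum_exp' (𝕂 := ℂ) (𝔸 := ℂ)
      ((inner ℝ v (z y) : ℂ) * I)

open Complex in
/-- A finite signed measure with density `h` vanishes if its image under a measurable embedding
into a Hilbert space has vanishing Fourier transform. -/
theorem ae_eq_zero_of_integral_mul_exp_inner_eq_zero [CompleteSpace F]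
    [SecondCountableTopology F] {h : X → ℝ} (hh : Integrable h μ) (hmeas : Measurable h)
    {z : X → F} (hz : MeasurableEmbedding z)
    (hfour : ∀ v : F, ∫ y, (h y : ℂ) * exp (inner ℝ (z y) v * I) ∂μ = 0) : h =ᵐ[μ] 0 := by
  have hexp (v : F) : Measurable fun y ↦ exp (inner ℝ (z y) v * I) :=
    (by fun_prop : Continuous fun w : F ↦ exp (inner ℝ w v * I)).measurable.comp hz.measurable
  have hchar {g : X → ℝ} (hg : Measurable g) (v : F) :
      charFun ((μ.withDensity fun y ↦ ENNReal.ofReal (g y)).map z) v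
        = ∫ y, ((max (g y) 0 : ℝ) : ℂ) * exp (inner ℝ (z y) v * I) ∂μ := by
    rw [charFun_apply, hz.integral_map, integral_withDensity_eq_integral_toReal_smul
      hg.ennreal_ofReal (Eventually.of_forall fun _ ↦ ENNReal.ofReal_lt_top)]
    simp only [ENNReal.toReal_ofReal', real_smul]
  have hint {g : X → ℝ} (hg : Integrable g μ) (v : F) :
      Integrable (fun y ↦ ((max (g y) 0 : ℝ) : ℂ) * exp (inner ℝ (z y) v * I)) μ := by
    refine (hg.pos_part.ofReal (𝕜 := ℂ)).mul_bdd (c := 1) (hexp v).aestronglyMeasurable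
      (Eventually.of_forall fun y ↦ ?_)
    rw [norm_exp_ofReal_mul_I]
  have := isFiniteMeasure_withDensity_ofReal hh.2
  have := isFiniteMeasure_withDensity_ofReal hh.neg.2
  have heq : (μ.withDensity fun y ↦ ENNReal.ofReal (h y)).map z
      = (μ.withDensity fun y ↦ ENNReal.ofReal ((-h) y)).map z := by
    refine Measure.ext_of_charFun (funext fun v ↦ ?_)
    rw [hchar hmeas, hchar hmeas.neg, ← sub_eq_zero, ← integral_sub (hint hh v) (hint hh.neg v),
      ← hfour v]
    congr 1 with y
    rw [← sub_mul, ← ofReal_sub, Pi.neg_apply, max_zero_sub_eq_self]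
  have heq' := congrArg (Measure.comap z) heq
  rw [hz.comap_map, hz.comap_map, withDensity_eq_iff hmeas.ennreal_ofReal.aemeasurable
    hmeas.neg.ennreal_ofReal.aemeasurable hh.lintegral_lt_top.ne] at heq'
  filter_upwards [heq'] with y hy
  rw [Pi.neg_apply] at hy
  rcases le_total (h y) 0 with h0 | h0
  · rw [ENNReal.ofReal_of_nonpos h0, eq_comm, ENNReal.ofReal_eq_zero] at hy
    exact le_antisymm h0 (neg_nonpos.1 hy)
  · rw [ENNReal.ofReal_of_nonpos (neg_nonpos.2 h0), ENNReal.ofReal_eq_zero] at hy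
    exact le_antisymm hy h0

end Moments

theorem injective_inv_norm_sq_smul {E : Type*} [NormedAddCommGroup E] [NormedSpace ℝ E] :
    Function.Injective fun y : E ↦ (‖y‖ ^ 2)⁻¹ • y := by
  have : Function.Involutive fun y : E ↦ (‖y‖ ^ 2)⁻¹ • y := fun y ↦ by
    rcases eq_or_ne y 0 with rfl | hy
    · simp
    have hy' : ‖y‖ ≠ 0 := norm_ne_zero_iff.2 hy
    beta_reduce
    rw [norm_smul, smul_smul, norm_inv, norm_pow, norm_norm]
    convert one_smul ℝ y using 2
    field_simp
  exact this.injective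

/-- **M. Riesz's theorem** on a finite-dimensional inner product space: a bounded continuous
function is zero if it and its convolution with `‖·‖ ^ (-a)`, `a > dim`, both vanish on the same
ball centred at the origin. -/
theorem eq_zero_of_integral_mul_norm_sub_rpow_eq_zero {E : Type*} [NormedAddCommGroup E]
    [InnerProductSpace ℝ E] [FiniteDimensional ℝ E] [MeasurableSpace E] [BorelSpace E]
    {μ : Measure E} [μ.IsAddHaarMeasure] {φ : E → ℝ} {ε M a : ℝ} (hε : 0 < ε)
    (hφ : Continuous φ) (hM : ∀ y, |φ y| ≤ M) (hvan : ∀ y, ‖y‖ ≤ ε → φ y = 0)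
    (ha : (Module.finrank ℝ E : ℝ) < a)
    (h : ∀ x, ‖x‖ < ε → ∫ y, φ y * ‖y - x‖ ^ (-a) ∂μ = 0) : φ = 0 := by
  have hφ' : AEStronglyMeasurable φ μ := hφ.aestronglyMeasurable
  have h0 : ‖(0 : E)‖ < ε := by simpa using hε
  have hint : Integrable (fun y ↦ φ y * ‖y‖ ^ (-a)) μ := by
    simpa [rieszMonomial] using
      integrable_mul_rieszMonomial hφ' hM hvan 0 (m := 0) (b := a) (by simpa using ha) h0
  have hmeas : Measurable fun y ↦ φ y * ‖y‖ ^ (-a) :=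
    hφ.measurable.mul (measurable_norm.pow_const _)
  have hz : Measurable fun y : E ↦ (‖y‖ ^ 2)⁻¹ • y := by fun_prop
  have hne {y : E} (hy : φ y ≠ 0) : ε < ‖y‖ := lt_of_not_ge fun hle ↦ hy (hvan y hle)
  have hfour := integral_mul_exp_inner_eq_zero hint hz (R := ε⁻¹) (fun y hy ↦ ?_) fun v m ↦ ?_
  · have hae := ae_eq_zero_of_integral_mul_exp_inner_eq_zero hint hmeas
      (hz.measurableEmbedding injective_inv_norm_sq_smul) hfour
    refine hφ.ae_eq_iff_eq μ continuous_zero |>.1 ?_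
    filter_upwards [hae] with y hy
    by_contra hy'
    exact (mul_ne_zero hy' (Real.rpow_pos_of_pos (hε.trans (hne hy')) _).ne') hy
  · have hy' := hne (left_ne_zero_of_mul hy)
    have hy0 : ‖y‖ ≠ 0 := (hε.trans hy').ne'
    rw [norm_smul, norm_inv, norm_pow, norm_norm,
      show (‖y‖ ^ 2)⁻¹ * ‖y‖ = ‖y‖⁻¹ by field_simp]
    gcongr
  · rw [← integral_mul_rieszMonomial_eq_zero hφ' hM hvan ha h v m 0 h0]
    congr 1 with y
    rcases eq_or_ne (φ y) 0 with hy | hy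
    · simp [hy]
    have hy0 : 0 < ‖y‖ := hε.trans (hne hy)
    rw [rieszMonomial, sub_zero, inner_smul_right, mul_pow, mul_assoc, Nat.cast_zero, add_zero,
      neg_add, Real.rpow_add hy0, Real.rpow_neg hy0.le (2 * (m : ℝ)), Real.rpow_mul hy0.le,
      Real.rpow_natCast, Real.rpow_two, inv_pow]
    ring

/-- Dual form of the unique continuation principle for the fractional Laplacian `(-Δ)^s`:
if a continuous function `φ` vanishing at infinity vanishes on the closed ball of radius `ε`
and annihilates all the translated Riesz kernels `y ↦ |y - x|^{-(n+2s)}`, `|x| < ε`,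
then `φ ≡ 0`. -/
theorem fractional_laplacian_ucp_dual
    (n : ℕ) (hn : 1 ≤ n) (s : ℝ) (hs : s ∈ Set.Ioo (0 : ℝ) 1)
    (ε : ℝ) (hε : 0 < ε)
    (φ : EuclideanSpace ℝ (Fin n) → ℝ)
    (hcont : Continuous φ)
    (hinf : Tendsto φ (cocompact (EuclideanSpace ℝ (Fin n))) (nhds 0))
    (hvan : ∀ y : EuclideanSpace ℝ (Fin n), ‖y‖ ≤ ε → φ y = 0)
    (hker : ∀ x : EuclideanSpace ℝ (Fin n), ‖x‖ < ε →
      ∫ y : EuclideanSpace ℝ (Fin n), φ y * ‖y - x‖ ^ (-((n : ℝ) + 2 * s)) = 0) :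
    φ = 0 := by
  have hC : ∃ M, ∀ y, |φ y| ≤ M := by
    let f : ZeroAtInftyContinuousMap (EuclideanSpace ℝ (Fin n)) ℝ := ⟨⟨φ, hcont⟩, hinf⟩
    exact ⟨‖f.toBCF‖, f.toBCF.norm_coe_le_norm⟩
  obtain ⟨M, hM⟩ := hC
  refine eq_zero_of_integral_mul_norm_sub_rpow_eq_zero hε hcont hM hvan ?_ hker
  rw [finrank_euclideanSpace_fin]
  linarith [hs.1]
end

section
/- Let r, s ∈ (0,1), c₁, c₂ > 0, and ε > 0. Define the kernel k : ℝ \ {0} → (0,∞) by k(w) = c₁·|w|^{-(1+2r)} for w < 0 and k(w) = c₂·|w|^{-(1+2s)} for w > 0. Suppose φ : ℝ → ℝ is continuous, vanishes at infinity, and φ(y) = 0 for all |y| ≤ ε. If ∫_ℝ φ(y) · k(y − x) dy = 0 for every x with |x| < ε, then φ = 0 everywhere on ℝ. (Unique continuation for one-dimensional, possibly non-symmetric stable-type Lévy operators.) -/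
open MeasureTheory Filter

/-- The complex plane cut along the real half-line `[ε, ∞)`. -/
def cutPlane (ε : ℝ) : Set ℂ := {z | (ε : ℂ) - z ∈ Complex.slitPlane}

/-- The generalized Stieltjes transform `z ↦ ∫_ε^∞ φ(y) (y - z)^(-a) dy`. -/
noncomputable def stieltjes (ε a : ℝ) (φ : ℝ → ℝ) (z : ℂ) : ℂ :=
  ∫ y in Set.Ioi ε, (φ y : ℂ) * ((y : ℂ) - z) ^ (((-a : ℝ)) : ℂ)

section cutPlane

variable {ε : ℝ}

theorem mem_cutPlane_iff {z : ℂ} : z ∈ cutPlane ε ↔ z.re < ε ∨ z.im ≠ 0 := by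
  simp [cutPlane, Complex.mem_slitPlane_iff]

theorem isOpen_cutPlane : IsOpen (cutPlane ε) :=
  Complex.isOpen_slitPlane.preimage (by fun_prop)

theorem sub_mem_slitPlane_of_mem_cutPlane {z : ℂ} (hz : z ∈ cutPlane ε) {y : ℝ} (hy : ε < y) :
    (y : ℂ) - z ∈ Complex.slitPlane := by
  rw [mem_cutPlane_iff] at hz
  rw [Complex.mem_slitPlane_iff]
  rcases hz with h | h
  · left; simp; linarith
  · right; simpa using h

theorem starConvex_cutPlane (hε : 0 < ε) : StarConvex ℝ 0 (cutPlane ε) := by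
  rw [starConvex_zero_iff]
  intro z hz t ht ht1
  rw [mem_cutPlane_iff] at hz ⊢
  rcases ht.eq_or_lt with rfl | ht
  · simp [hε]
  rcases hz with h | h
  · left
    simp only [Complex.real_smul, Complex.re_ofReal_mul]
    nlinarith
  · right
    simpa [ht.ne'] using h

/-- Near a point of the cut plane, the distance to `y ≥ ε` grows linearly in `y`. -/
theorem exists_ball_linear_lower_bound (hε : 0 < ε) {z₀ : ℂ} (hz₀ : z₀ ∈ cutPlane ε) :
    ∃ ρ > 0, ∃ c > 0, ∀ z ∈ Metric.ball z₀ ρ, z ∈ cutPlane ε ∧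
      ∀ y : ℝ, ε < y → c * y ≤ ‖(y : ℂ) - z‖ := by
  obtain ⟨d, hd, hball⟩ := Metric.isOpen_iff.1 isOpen_cutPlane z₀ hz₀
  have hdist (y : ℝ) (hy : ε < y) : d ≤ ‖(y : ℂ) - z₀‖ := by
    by_contra! h
    have := hball (show (y : ℂ) ∈ Metric.ball z₀ d by rwa [Metric.mem_ball, dist_eq_norm])
    simp [mem_cutPlane_iff] at this
    linarith
  set c : ℝ := d / (d + ‖z₀‖) with hc
  have hcpos : 0 < c := by positivity
  have hlin (y : ℝ) (hy : ε < y) : c * y ≤ ‖(y : ℂ) - z₀‖ := by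
    have h1 := hdist y hy
    have h2 : y ≤ ‖(y : ℂ) - z₀‖ + ‖z₀‖ := by
      have := norm_add_le ((y : ℂ) - z₀) z₀
      rw [sub_add_cancel, Complex.norm_real, Real.norm_of_nonneg (hε.trans hy).le] at this
      exact this
    rw [hc, div_mul_eq_mul_div, div_le_iff₀ (by positivity)]
    nlinarith [norm_nonneg z₀]
  refine ⟨min d (c * ε / 2), by positivity, c / 2, by positivity, fun z hz => ⟨hball ?_, ?_⟩⟩
  · exact Metric.ball_subset_ball (min_le_left _ _) hz
  · intro y hy
    have h1 := hlin y hy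
    have h2 : ‖z - z₀‖ < c * ε / 2 := by
      rw [← dist_eq_norm]
      exact (Metric.mem_ball.1 hz).trans_le (min_le_right _ _)
    have h3 := norm_add_le ((y : ℂ) - z) (z - z₀)
    rw [sub_add_sub_cancel] at h3
    nlinarith

end cutPlane

section stieltjes

variable {ε a M : ℝ} {φ : ℝ → ℝ}

theorem norm_cpow_neg_le {c y : ℝ} {w : ℂ} (hc : 0 < c) (hy : 0 < y) (ha : 0 ≤ a)
    (h : c * y ≤ ‖w‖) : ‖w ^ (((-a : ℝ)) : ℂ)‖ ≤ c ^ (-a) * y ^ (-a) := by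
  rw [Complex.norm_cpow_real, ← Real.mul_rpow hc.le hy.le]
  exact Real.rpow_le_rpow_of_nonpos (by positivity) h (by linarith)

theorem norm_stieltjes_integrand_le (hM : ∀ y, |φ y| ≤ M) {c y : ℝ} {w : ℂ} (hc : 0 < c)
    (hy : 0 < y) (ha : 0 ≤ a) (h : c * y ≤ ‖w‖) :
    ‖(φ y : ℂ) * w ^ (((-a : ℝ)) : ℂ)‖ ≤ M * c ^ (-a) * y ^ (-a) := by
  rw [norm_mul, Complex.norm_real, mul_assoc]
  exact mul_le_mul (hM y) (norm_cpow_neg_le hc hy ha h) (norm_nonneg _)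
    ((abs_nonneg _).trans (hM 0))

theorem aestronglyMeasurable_stieltjes_integrand (hφ : Continuous φ) {z : ℂ}
    (hz : z ∈ cutPlane ε) :
    AEStronglyMeasurable (fun y : ℝ => (φ y : ℂ) * ((y : ℂ) - z) ^ (((-a : ℝ)) : ℂ))
      (volume.restrict (Set.Ioi ε)) := by
  refine ContinuousOn.aestronglyMeasurable ?_ measurableSet_Ioi
  refine ContinuousOn.mul (by fun_prop) (ContinuousOn.cpow_const (by fun_prop) ?_)
  exact fun y hy => sub_mem_slitPlane_of_mem_cutPlane hz hy

theorem integrableOn_const_mul_rpow_neg (hε : 0 < ε) (ha : 1 < a) (C : ℝ) :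
    IntegrableOn (fun y : ℝ => C * y ^ (-a)) (Set.Ioi ε) :=
  (integrableOn_Ioi_rpow_of_lt (by linarith) hε).const_mul C

theorem integrableOn_stieltjes_integrand (hε : 0 < ε) (ha : 1 < a) (hφ : Continuous φ)
    (hM : ∀ y, |φ y| ≤ M) {z : ℂ} (hz : z ∈ cutPlane ε) :
    IntegrableOn (fun y : ℝ => (φ y : ℂ) * ((y : ℂ) - z) ^ (((-a : ℝ)) : ℂ)) (Set.Ioi ε) := by
  obtain ⟨ρ, hρ, c, hc, h⟩ := exists_ball_linear_lower_bound hε hz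
  refine Integrable.mono' (integrableOn_const_mul_rpow_neg hε ha (M * c ^ (-a)))
    (aestronglyMeasurable_stieltjes_integrand hφ hz) ?_
  filter_upwards [ae_restrict_mem measurableSet_Ioi] with y hy
  exact norm_stieltjes_integrand_le hM hc (hε.trans hy) (by linarith)
    ((h z (Metric.mem_ball_self hρ)).2 y hy)

theorem hasDerivAt_stieltjes (hε : 0 < ε) (ha : 1 < a) (hφ : Continuous φ)
    (hM : ∀ y, |φ y| ≤ M) {z : ℂ} (hz : z ∈ cutPlane ε) :
    HasDerivAt (stieltjes ε a φ) (a * stieltjes ε (a + 1) φ z) z := by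
  obtain ⟨ρ, hρ, c, hc, h⟩ := exists_ball_linear_lower_bound hε hz
  have hderiv := (hasDerivAt_integral_of_dominated_loc_of_deriv_le
    (μ := volume.restrict (Set.Ioi ε)) (x₀ := z)
    (F := fun z y => (φ y : ℂ) * ((y : ℂ) - z) ^ (((-a : ℝ)) : ℂ))
    (F' := fun z y => (a : ℂ) * ((φ y : ℂ) * ((y : ℂ) - z) ^ (((-(a + 1) : ℝ)) : ℂ)))
    (bound := fun y => |a| * (M * c ^ (-(a + 1)) * y ^ (-(a + 1))))
    (Metric.ball_mem_nhds z hρ) ?_ ?_ ?_ ?_ ?_ ?_).2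
  · rwa [integral_const_mul] at hderiv
  · filter_upwards [isOpen_cutPlane.mem_nhds hz] with w hw
    exact aestronglyMeasurable_stieltjes_integrand hφ hw
  · exact integrableOn_stieltjes_integrand hε ha hφ hM hz
  · exact (aestronglyMeasurable_stieltjes_integrand hφ hz).const_mul _
  · filter_upwards [ae_restrict_mem measurableSet_Ioi] with y hy w hw
    rw [norm_mul, Complex.norm_real]
    exact mul_le_mul_of_nonneg_left (norm_stieltjes_integrand_le hM hc (hε.trans hy)
      (by linarith) ((h w hw).2 y hy)) (abs_nonneg _)
  · exact (integrableOn_const_mul_rpow_neg hε (by linarith) _).const_mul _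
  · filter_upwards [ae_restrict_mem measurableSet_Ioi] with y hy w hw
    have := (((hasDerivAt_id w).const_sub (y : ℂ)).cpow_const (c := ((-a : ℝ) : ℂ))
      (sub_mem_slitPlane_of_mem_cutPlane (h w hw).1 hy)).const_mul (φ y : ℂ)
    convert! this using 1
    have he : ((-(a + 1) : ℝ) : ℂ) = ((-a : ℝ) : ℂ) - 1 := by push_cast; ring
    rw [he]
    simp only [id]
    push_cast
    ring

theorem differentiableOn_stieltjes (hε : 0 < ε) (ha : 1 < a) (hφ : Continuous φ)
    (hM : ∀ y, |φ y| ≤ M) : DifferentiableOn ℂ (stieltjes ε a φ) (cutPlane ε) :=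
  fun _ hz => (hasDerivAt_stieltjes hε ha hφ hM hz).differentiableAt.differentiableWithinAt

theorem norm_stieltjes_le_of_re_nonpos (hε : 0 < ε) (ha : 1 < a) (hM : ∀ y, |φ y| ≤ M) {z : ℂ}
    (hz : z.re ≤ 0) :
    ‖stieltjes ε a φ z‖ ≤ ∫ y in Set.Ioi ε, M * y ^ (-a) := by
  refine norm_integral_le_of_norm_le (integrableOn_const_mul_rpow_neg hε ha M) ?_
  filter_upwards [ae_restrict_mem measurableSet_Ioi] with y hy
  have hy0 : 0 < y := hε.trans hy
  have h : 1 * y ≤ ‖(y : ℂ) - z‖ := by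
    have := Complex.re_le_norm ((y : ℂ) - z)
    simp at this
    linarith
  simpa using norm_stieltjes_integrand_le hM one_pos hy0 (by linarith) h

theorem stieltjes_add_one_eq_zero (hε : 0 < ε) (ha : 1 < a) (hφ : Continuous φ)
    (hM : ∀ y, |φ y| ≤ M) {C : ℂ} (h : ∀ z ∈ cutPlane ε, stieltjes ε a φ z = C)
    {z : ℂ} (hz : z ∈ cutPlane ε) : stieltjes ε (a + 1) φ z = 0 := by
  have h1 := hasDerivAt_stieltjes hε ha hφ hM hz
  have h2 : HasDerivAt (stieltjes ε a φ) 0 z :=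
    (hasDerivAt_const z C).congr_of_eventuallyEq
      (by filter_upwards [isOpen_cutPlane.mem_nhds hz] with w hw using h w hw)
  have ha0 : (a : ℂ) ≠ 0 := by exact_mod_cast (by linarith : a ≠ 0)
  exact (mul_eq_zero.1 (h1.unique h2)).resolve_left ha0

theorem stieltjes_add_nat_eq_zero (hε : 0 < ε) (ha : 1 < a) (hφ : Continuous φ)
    (hM : ∀ y, |φ y| ≤ M) (h : ∀ z ∈ cutPlane ε, stieltjes ε a φ z = 0) (n : ℕ) :
    ∀ z ∈ cutPlane ε, stieltjes ε (a + n) φ z = 0 := by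
  induction n with
  | zero => simpa using h
  | succ n ih =>
    intro z hz
    have hn : (0 : ℝ) ≤ n := n.cast_nonneg
    have := stieltjes_add_one_eq_zero hε (by linarith) hφ hM ih hz
    rwa [add_assoc, ← Nat.cast_succ] at this

theorem stieltjes_zero_eq_ofReal (hε : 0 < ε) :
    stieltjes ε a φ 0 = ((∫ y in Set.Ioi ε, φ y * y ^ (-a) : ℝ) : ℂ) := by
  rw [stieltjes, ← integral_complex_ofReal]
  refine setIntegral_congr_fun measurableSet_Ioi fun y hy => ?_
  simp only [sub_zero]
  rw [Complex.ofReal_mul, Complex.ofReal_cpow (hε.trans hy).le]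

theorem continuous_comp_inv_of_tendsto_cocompact (hφ : Continuous φ) (h0 : φ 0 = 0)
    (hinf : Tendsto φ (cocompact ℝ) (nhds 0)) : Continuous fun u => φ u⁻¹ := by
  rw [continuous_iff_continuousAt]
  intro u
  rcases eq_or_ne u 0 with rfl | hu
  · rw [continuousAt_iff_punctured_nhds, inv_zero, h0]
    rw [← Metric.cobounded_eq_cocompact] at hinf
    exact hinf.comp tendsto_inv₀_nhdsNE_zero
  · exact hφ.continuousAt.comp (continuousAt_inv₀ hu)

/-- A continuous function vanishing at infinity whose weighted negative moments on `(ε, ∞)` are all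
zero vanishes on `(ε, ∞)`. -/
theorem eqOn_zero_of_moments_eq_zero (hε : 0 < ε) (ha : 1 < a) (hφ : Continuous φ)
    (h0 : φ 0 = 0) (hinf : Tendsto φ (cocompact ℝ) (nhds 0)) (hM : ∀ y, |φ y| ≤ M)
    (h : ∀ n : ℕ, ∫ y in Set.Ioi ε, φ y * y ^ (-(a + n)) = 0) :
    Set.EqOn φ 0 (Set.Ioi ε) := by
  set w : ℝ → ℝ := fun y => φ y * y ^ (-a) with hw
  have hwc : ContinuousOn w (Set.Ioi ε) := hφ.continuousOn.mul
    (continuousOn_id.rpow_const fun y hy => Or.inl (hε.trans hy).ne')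
  have hwint : IntegrableOn w (Set.Ioi ε) := by
    refine Integrable.mono' (integrableOn_const_mul_rpow_neg hε ha M)
      (hwc.aestronglyMeasurable measurableSet_Ioi) ?_
    filter_upwards [ae_restrict_mem measurableSet_Ioi] with y hy
    have hp := Real.rpow_nonneg (hε.trans hy).le (-a)
    rw [hw, norm_mul, Real.norm_of_nonneg hp]
    exact mul_le_mul_of_nonneg_right (hM y) hp
  have hwφ : IntegrableOn (fun y => w y * φ y) (Set.Ioi ε) :=
    hwint.mul_bdd (c := M) hφ.aestronglyMeasurable (ae_of_all _ hM)
  have hmono (n : ℕ) : IntegrableOn (fun y => w y * (y⁻¹) ^ n) (Set.Ioi ε) ∧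
      ∫ y in Set.Ioi ε, w y * (y⁻¹) ^ n = 0 := by
    constructor
    · refine hwint.mul_bdd (c := (ε⁻¹) ^ n)
        (measurable_inv.pow_const n).aestronglyMeasurable ?_
      filter_upwards [ae_restrict_mem measurableSet_Ioi] with y hy
      have hy0 : 0 < y := hε.trans hy
      rw [Real.norm_of_nonneg (by positivity)]
      gcongr
      exact le_of_lt hy
    · rw [← h n]
      refine setIntegral_congr_fun measurableSet_Ioi fun y hy => ?_
      have hy0 : 0 < y := hε.trans hy
      simp only [hw]
      rw [neg_add, Real.rpow_add hy0, Real.rpow_neg hy0.le (n : ℝ), Real.rpow_natCast, inv_pow,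
        mul_assoc]
  have hpoly (p : Polynomial ℝ) : IntegrableOn (fun y => w y * p.eval y⁻¹) (Set.Ioi ε) ∧
      ∫ y in Set.Ioi ε, w y * p.eval y⁻¹ = 0 := by
    induction p using Polynomial.induction_on' with
    | add p q hp hq =>
      simp only [Polynomial.eval_add, mul_add]
      exact ⟨hp.1.add hq.1, by rw [integral_add hp.1 hq.1, hp.2, hq.2, add_zero]⟩
    | monomial n c =>
      simp only [Polynomial.eval_monomial, mul_left_comm _ c]
      exact ⟨(hmono n).1.const_mul c, by rw [integral_const_mul, (hmono n).2, mul_zero]⟩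
  have hsmall (δ : ℝ) (hδ : 0 < δ) :
      ‖∫ y in Set.Ioi ε, w y * φ y‖ ≤ (∫ y in Set.Ioi ε, ‖w y‖) * δ := by
    obtain ⟨p, hp⟩ := exists_polynomial_near_of_continuousOn 0 ε⁻¹ (fun u => φ u⁻¹)
      (continuous_comp_inv_of_tendsto_cocompact hφ h0 hinf).continuousOn δ hδ
    rw [← sub_zero (∫ y in Set.Ioi ε, w y * φ y), ← (hpoly p).2, ← integral_sub hwφ (hpoly p).1,
      ← integral_mul_const]
    refine norm_integral_le_of_norm_le (hwint.norm.mul_const δ) ?_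
    filter_upwards [ae_restrict_mem measurableSet_Ioi] with y hy
    have hy0 : 0 < y := hε.trans hy
    have := hp y⁻¹ ⟨by positivity, by gcongr; exact le_of_lt hy⟩
    rw [inv_inv, abs_sub_comm] at this
    rw [← mul_sub, norm_mul]
    exact mul_le_mul_of_nonneg_left this.le (norm_nonneg _)
  have hzero : ∫ y in Set.Ioi ε, w y * φ y = 0 := by
    have hlim : Tendsto (fun δ : ℝ => (∫ y in Set.Ioi ε, ‖w y‖) * δ) (nhdsWithin 0 (Set.Ioi 0))
        (nhds 0) := by
      have : Continuous fun δ : ℝ => (∫ y in Set.Ioi ε, ‖w y‖) * δ := by fun_prop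
      simpa using (this.tendsto 0).mono_left nhdsWithin_le_nhds
    exact norm_le_zero_iff.1 (ge_of_tendsto hlim
      (by filter_upwards [self_mem_nhdsWithin] with δ hδ using hsmall δ hδ))
  have hnonneg : 0 ≤ᵐ[volume.restrict (Set.Ioi ε)] fun y => w y * φ y := by
    filter_upwards [ae_restrict_mem measurableSet_Ioi] with y hy
    have hp := Real.rpow_nonneg (hε.trans hy).le (-a)
    simp only [hw, Pi.zero_apply]
    nlinarith [mul_nonneg hp (mul_self_nonneg (φ y))]
  have hae := (setIntegral_eq_zero_iff_of_nonneg_ae hnonneg hwφ).1 hzero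
  have heq := Measure.eqOn_open_of_ae_eq hae isOpen_Ioi (hwc.mul hφ.continuousOn) continuousOn_const
  intro y hy
  have hp := Real.rpow_pos_of_pos (hε.trans hy) (-a)
  have := heq hy
  simp only [hw, Pi.zero_apply] at this
  simpa [hp.ne'] using this

theorem eqOn_zero_of_stieltjes_eq_const (hε : 0 < ε) (ha : 1 < a) (hφ : Continuous φ)
    (h0 : φ 0 = 0) (hinf : Tendsto φ (cocompact ℝ) (nhds 0)) (hM : ∀ y, |φ y| ≤ M) {C : ℂ}
    (h : ∀ z ∈ cutPlane ε, stieltjes ε a φ z = C) : Set.EqOn φ 0 (Set.Ioi ε) := by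
  have ha1 : 1 < a + 1 := by linarith
  refine eqOn_zero_of_moments_eq_zero hε ha1 hφ h0 hinf hM fun n => ?_
  have hz : (0 : ℂ) ∈ cutPlane ε := by simp [mem_cutPlane_iff, hε]
  have := stieltjes_add_nat_eq_zero hε ha1 hφ hM
    (fun z hz => stieltjes_add_one_eq_zero hε ha hφ hM h hz) n 0 hz
  rw [stieltjes_zero_eq_ofReal hε] at this
  exact_mod_cast this

/-- If Stieltjes transforms supported on opposite half-lines cancel near the origin of the real
line, then both are constant. -/
theorem stieltjes_eq_const_of_add_eq_zero {b : ℝ} {ψ : ℝ → ℝ} {N : ℝ} (hε : 0 < ε) (ha : 1 < a)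
    (hb : 1 < b) (hφ : Continuous φ) (hψ : Continuous ψ) (hM : ∀ y, |φ y| ≤ M)
    (hN : ∀ y, |ψ y| ≤ N) (α β : ℂ)
    (h : ∀ x : ℝ, |x| < ε → α * stieltjes ε a φ x + β * stieltjes ε b ψ (-x) = 0) :
    ∃ C : ℂ, (∀ z ∈ cutPlane ε, α * stieltjes ε a φ z = C) ∧
      ∀ z ∈ cutPlane ε, β * stieltjes ε b ψ z = -C := by
  set f : ℂ → ℂ := fun z => α * stieltjes ε a φ z with hf
  set g : ℂ → ℂ := fun z => -(β * stieltjes ε b ψ (-z)) with hg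
  have hfd : DifferentiableOn ℂ f (cutPlane ε) :=
    (differentiableOn_stieltjes hε ha hφ hM).const_mul α
  have hgd : DifferentiableOn ℂ g (-cutPlane ε) :=
    (((differentiableOn_stieltjes hε hb hψ hN).comp differentiableOn_id.neg
      fun _ hz => hz).const_mul β).neg
  have hopen : IsOpen (cutPlane ε ∩ -cutPlane ε) := isOpen_cutPlane.inter isOpen_cutPlane.neg
  have hstar : StarConvex ℝ 0 (cutPlane ε ∩ -cutPlane ε) := by
    have h1 := starConvex_cutPlane hε
    exact h1.inter (by simpa using h1.neg)
  have h0 : (0 : ℂ) ∈ cutPlane ε ∩ -cutPlane ε := by simp [mem_cutPlane_iff, hε]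
  have hfg : Set.EqOn f g (cutPlane ε ∩ -cutPlane ε) := by
    refine AnalyticOnNhd.eqOn_of_preconnected_of_frequently_eq
      ((hfd.mono Set.inter_subset_left).analyticOnNhd hopen)
      ((hgd.mono Set.inter_subset_right).analyticOnNhd hopen)
      (hstar.isPathConnected h0).isConnected.isPreconnected h0 ?_
    have hreal : ∀ᶠ x : ℝ in nhdsWithin 0 {0}ᶜ, f x = g x := by
      filter_upwards [nhdsWithin_le_nhds (Metric.ball_mem_nhds (0 : ℝ) hε)] with x hx
      have := h x (by simpa using hx)
      exact eq_neg_of_add_eq_zero_left this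
    have htend : Tendsto (fun x : ℝ => (x : ℂ)) (nhdsWithin 0 {0}ᶜ) (nhdsWithin 0 {0}ᶜ) := by
      refine tendsto_nhdsWithin_iff.2 ⟨?_, ?_⟩
      · exact (Complex.continuous_ofReal.tendsto' 0 0 Complex.ofReal_zero).mono_left
          nhdsWithin_le_nhds
      · filter_upwards [self_mem_nhdsWithin] with x hx
        simpa using hx
    exact htend.frequently hreal.frequently
  classical
  set F : ℂ → ℂ := fun z => if z ∈ cutPlane ε then f z else g z with hF
  have hFf : ∀ z ∈ cutPlane ε, F z = f z := fun z hz => if_pos hz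
  have hFg : ∀ z ∈ -cutPlane ε, F z = g z := fun z hz => by
    by_cases hz' : z ∈ cutPlane ε
    · rw [hFf z hz', hfg ⟨hz', hz⟩]
    · exact if_neg hz'
  have hleft {z : ℂ} (hz : z.re ≤ 0) : z ∈ cutPlane ε :=
    mem_cutPlane_iff.2 (Or.inl (hz.trans_lt hε))
  have hright {z : ℂ} (hz : 0 ≤ z.re) : z ∈ -cutPlane ε := hleft (z := -z) (by simpa using hz)
  have hFd : Differentiable ℂ F := fun z => by
    rcases le_total z.re 0 with hz | hz
    · refine (hfd.differentiableAt (isOpen_cutPlane.mem_nhds (hleft hz))).congr_of_eventuallyEq ?_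
      filter_upwards [isOpen_cutPlane.mem_nhds (hleft hz)] with w hw using hFf w hw
    · have hn := (isOpen_cutPlane (ε := ε)).neg.mem_nhds (hright hz)
      refine (hgd.differentiableAt hn).congr_of_eventuallyEq ?_
      filter_upwards [hn] with w hw using hFg w hw
  have hFb : Bornology.IsBounded (Set.range F) := by
    refine isBounded_iff_forall_norm_le.2
      ⟨max (‖α‖ * ∫ y in Set.Ioi ε, M * y ^ (-a)) (‖β‖ * ∫ y in Set.Ioi ε, N * y ^ (-b)), ?_⟩
    rintro _ ⟨z, rfl⟩
    rcases le_total z.re 0 with hz | hz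
    · refine le_max_of_le_left ?_
      rw [hFf z (hleft hz), hf, norm_mul]
      exact mul_le_mul_of_nonneg_left (norm_stieltjes_le_of_re_nonpos hε ha hM hz) (norm_nonneg _)
    · refine le_max_of_le_right ?_
      rw [hFg z (hright hz), hg, norm_neg, norm_mul]
      exact mul_le_mul_of_nonneg_left
        (norm_stieltjes_le_of_re_nonpos hε hb hN (by simpa using hz)) (norm_nonneg _)
  have hconst (z : ℂ) : F z = F 0 := hFd.apply_eq_apply_of_bounded hFb z 0
  refine ⟨F 0, fun z hz => (hFf z hz).symm.trans (hconst z), fun z hz => ?_⟩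
  have h1 := hFg (-z) (by simpa using hz)
  rw [hconst, hg] at h1
  simp only [neg_neg] at h1
  rw [h1, neg_neg]

end stieltjes

/-- Unique continuation (dual form) for one-dimensional, possibly non-symmetric
stable-type Lévy operators, with kernel `k(w) = c₁|w|^{-(1+2r)}` for `w < 0` and
`k(w) = c₂|w|^{-(1+2s)}` for `w > 0`. -/
theorem nonsymmetric_stable_ucp_dual
    (r s : ℝ) (hr : r ∈ Set.Ioo (0 : ℝ) 1) (hs : s ∈ Set.Ioo (0 : ℝ) 1)
    (c₁ c₂ : ℝ) (hc₁ : 0 < c₁) (hc₂ : 0 < c₂)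
    (ε : ℝ) (hε : 0 < ε)
    (k : ℝ → ℝ)
    (hk : ∀ w : ℝ, w ≠ 0 →
      k w = if w < 0 then c₁ * |w| ^ (-(1 + 2 * r)) else c₂ * |w| ^ (-(1 + 2 * s)))
    (φ : ℝ → ℝ)
    (hcont : Continuous φ)
    (hinf : Tendsto φ (cocompact ℝ) (nhds 0))
    (hvan : ∀ y : ℝ, |y| ≤ ε → φ y = 0)
    (hker : ∀ x : ℝ, |x| < ε → ∫ y : ℝ, φ y * k (y - x) = 0) :
    φ = 0 := by
  have ha : 1 < 1 + 2 * s := by linarith [hs.1]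
  have hb : 1 < 1 + 2 * r := by linarith [hr.1]
  obtain ⟨M, hM⟩ : ∃ M, ∀ y, |φ y| ≤ M := by
    let Φ : ZeroAtInftyContinuousMap ℝ ℝ := ⟨⟨φ, hcont⟩, hinf⟩
    exact ⟨‖Φ.toBCF‖, fun y => Φ.toBCF.norm_coe_le_norm y⟩
  set ψ : ℝ → ℝ := fun y => φ (-y) with hψ
  have hψc : Continuous ψ := hcont.comp continuous_neg
  have hψM (y : ℝ) : |ψ y| ≤ M := hM (-y)
  have hψinf : Tendsto ψ (cocompact ℝ) (nhds 0) :=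
    hinf.comp (Homeomorph.neg ℝ).isClosedEmbedding.tendsto_cocompact
  have h0 : φ 0 = 0 := hvan 0 (by simpa using hε.le)
  have hsum (x : ℝ) (hx : |x| < ε) : (c₂ : ℂ) * stieltjes ε (1 + 2 * s) φ x +
      (c₁ : ℂ) * stieltjes ε (1 + 2 * r) ψ (-x) = 0 := by
    obtain ⟨hx1, hx2⟩ := abs_lt.1 hx
    have hxm : (x : ℂ) ∈ cutPlane ε := by simp [mem_cutPlane_iff, hx2]
    have hxm' : (-x : ℂ) ∈ cutPlane ε := by
      simp only [mem_cutPlane_iff, Complex.neg_re, Complex.ofReal_re]; left; linarith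
    set G : ℝ → ℂ := fun y => (φ y : ℂ) * ((y : ℂ) - x) ^ ((-(1 + 2 * s) : ℝ) : ℂ) with hG
    set H : ℝ → ℂ := fun y => (ψ y : ℂ) * ((y : ℂ) - (-x)) ^ ((-(1 + 2 * r) : ℝ) : ℂ) with hH
    have hGi : IntegrableOn G (Set.Ioi ε) := integrableOn_stieltjes_integrand hε ha hcont hM hxm
    have hHi : IntegrableOn H (Set.Ioi ε) := integrableOn_stieltjes_integrand hε hb hψc hψM hxm'
    have hHi' : IntegrableOn (fun y => H (-y)) (Set.Iio (-ε)) := by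
      simpa using hHi.comp_neg
    have hsplit (y : ℝ) : ((φ y * k (y - x) : ℝ) : ℂ) =
        c₂ * (Set.Ioi ε).indicator G y + c₁ * (Set.Iio (-ε)).indicator (fun y => H (-y)) y := by
      rcases le_or_gt |y| ε with hy | hy
      · have := abs_le.1 hy
        rw [Set.indicator_of_notMem (by simp [this.2]), Set.indicator_of_notMem (by simp [this.1]),
          hvan y hy]
        simp
      rcases lt_abs.1 hy with hy | hy
      · have hpos : 0 < y - x := by linarith
        rw [Set.indicator_of_mem (by simpa using hy),
          Set.indicator_of_notMem (by simp; linarith), hk _ hpos.ne', if_neg hpos.le.not_gt,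
          abs_of_pos hpos]
        simp only [hG]
        rw [← Complex.ofReal_sub, ← Complex.ofReal_cpow hpos.le]
        push_cast
        ring
      · have hneg : y - x < 0 := by linarith
        rw [Set.indicator_of_notMem (by simp; linarith),
          Set.indicator_of_mem (by simp; linarith), hk _ hneg.ne, if_pos hneg,
          abs_of_neg hneg]
        simp only [hH, hψ, neg_neg]
        rw [← Complex.ofReal_neg x, ← Complex.ofReal_sub, sub_neg_eq_add, neg_add_eq_sub,
          ← Complex.ofReal_cpow (by linarith), neg_sub]
        push_cast
        ring
    have hI : ((∫ y : ℝ, φ y * k (y - x) : ℝ) : ℂ) =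
        c₂ * (∫ y in Set.Ioi ε, G y) + c₁ * ∫ y in Set.Iio (-ε), H (-y) := by
      rw [← integral_complex_ofReal, integral_congr_ae (ae_of_all _ hsplit),
        integral_add ((hGi.integrable_indicator measurableSet_Ioi).const_mul _)
          ((hHi'.integrable_indicator measurableSet_Iio).const_mul _),
        integral_const_mul, integral_const_mul, integral_indicator measurableSet_Ioi,
        integral_indicator measurableSet_Iio]
    rw [hker x hx, ← integral_Iic_eq_integral_Iio, integral_comp_neg_Iic, neg_neg,
      Complex.ofReal_zero] at hI
    exact hI.symm
  obtain ⟨C, hC1, hC2⟩ := stieltjes_eq_const_of_add_eq_zero hε ha hb hcont hψc hM hψM _ _ hsum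
  have hc₁' : (c₁ : ℂ) ≠ 0 := by exact_mod_cast hc₁.ne'
  have hc₂' : (c₂ : ℂ) ≠ 0 := by exact_mod_cast hc₂.ne'
  have hφ0 := eqOn_zero_of_stieltjes_eq_const hε ha hcont h0 hinf hM
    (C := C / c₂) fun z hz => by rw [eq_div_iff hc₂', mul_comm, hC1 z hz]
  have hψ0 := eqOn_zero_of_stieltjes_eq_const hε hb hψc (by simpa [hψ] using h0) hψinf hψM
    (C := -C / c₁) fun z hz => by rw [eq_div_iff hc₁', mul_comm, hC2 z hz]
  funext y
  rcases le_or_gt |y| ε with hy | hy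
  · exact hvan y hy
  rcases lt_abs.1 hy with hy | hy
  · exact hφ0 hy
  · simpa [hψ] using hψ0 (show -y ∈ Set.Ioi ε from hy)
end

section
/- Let β ≥ 0 and let ρ be a measure on (0,∞) with ∫_{(0,∞)} min(t,1) ρ(dt) < ∞. Define the Bernstein function f : (0,∞) → [0,∞) by f(λ) = βλ + ∫_{(0,∞)} (1 − e^{−λt}) ρ(dt), and let α > 0. Then the following are equivalent: (b) ∫_{(1,∞)} e^{αt} ρ(dt) < ∞; (d) there exists a function g : (−α,∞) → ℝ that is real-analytic on (−α,∞), agrees with f on (0,∞), and has a finite limit as x → −α⁺ (i.e. g extends continuously to [−α,∞)). -/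
open MeasureTheory

section LaplaceTransform

open ProbabilityTheory Set Filter Topology
open scoped Nat NNReal ENNReal

variable {Ω : Type*} {m : MeasurableSpace Ω} {X : Ω → ℝ} {μ : Measure Ω}

/-- If the moment-generating function of a nonnegative variable agrees near `c` with the sum of a
power series centred at `c`, then the exponential moments up to the radius of convergence are
finite. -/
lemma integrable_exp_mul_of_hasFPowerSeriesOnBall (hX : 0 ≤ᵐ[μ] X) {c : ℝ}
    (hc : c ∈ interior (integrableExpSet X μ)) {G : ℝ → ℝ}
    {p : FormalMultilinearSeries ℝ ℝ ℝ} {R : ℝ≥0∞} (hp : HasFPowerSeriesOnBall G p c R)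
    (hG : G =ᶠ[𝓝 c] mgf X μ) {s : ℝ≥0} (hs : (s : ℝ≥0∞) < R) :
    Integrable (fun ω ↦ Real.exp ((c + s) * X ω)) μ := by
  have hXm : AEMeasurable X μ := aemeasurable_of_mem_interior_integrableExpSet hc
  have hpq := hp.hasFPowerSeriesAt.eq_formalMultilinearSeries_of_eventually
    (hasFPowerSeriesAt_mgf hc) hG
  have hint (n : ℕ) : Integrable (fun ω ↦ X ω ^ n * Real.exp (c * X ω)) μ :=
    integrable_pow_mul_exp_of_mem_interior_integrableExpSet hc n
  have hnn (n : ℕ) : 0 ≤ᵐ[μ] fun ω ↦ (s : ℝ) ^ n / n ! * (X ω ^ n * Real.exp (c * X ω)) := by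
    filter_upwards [hX] with ω hω
    have : 0 ≤ X ω := hω
    simp only [Pi.zero_apply]
    positivity
  have hsum : Summable fun n : ℕ ↦
      ∫ ω, (s : ℝ) ^ n / n ! * (X ω ^ n * Real.exp (c * X ω)) ∂μ := by
    refine (p.summable_norm_mul_pow (hs.trans_le hp.r_le)).congr fun n ↦ ?_
    rw [hpq, FormalMultilinearSeries.ofScalars_norm, integral_const_mul, Real.norm_of_nonneg]
    · ring
    · refine div_nonneg (integral_nonneg_of_ae ?_) (by positivity)
      filter_upwards [hX] with ω hω
      have : 0 ≤ X ω := hω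
      simp only [Pi.zero_apply]
      positivity
  have hexp (ω : Ω) : HasSum (fun n : ℕ ↦ (s : ℝ) ^ n / n ! * (X ω ^ n * Real.exp (c * X ω)))
      (Real.exp ((c + s) * X ω)) := by
    have h := (NormedSpace.expSeries_div_hasSum_exp ((s : ℝ) * X ω)).mul_right
      (Real.exp (c * X ω))
    rw [← Real.exp_eq_exp_ℝ, ← Real.exp_add] at h
    convert! h using 1
    · ext n
      rw [mul_pow]
      ring
    · ring_nf
  refine ⟨by fun_prop, ?_⟩
  rw [hasFiniteIntegral_iff_ofReal (ae_of_all _ fun ω ↦ (Real.exp_pos _).le)]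
  calc ∫⁻ ω, ENNReal.ofReal (Real.exp ((c + s) * X ω)) ∂μ
      = ∫⁻ ω, ∑' n : ℕ, ENNReal.ofReal ((s : ℝ) ^ n / n ! * (X ω ^ n * Real.exp (c * X ω))) ∂μ := by
        refine lintegral_congr_ae ?_
        filter_upwards [ae_all_iff.2 hnn] with ω hω
        rw [← (hexp ω).tsum_eq, ENNReal.ofReal_tsum_of_nonneg hω (hexp ω).summable]
    _ = ∑' n : ℕ, ENNReal.ofReal (∫ ω, (s : ℝ) ^ n / n ! * (X ω ^ n * Real.exp (c * X ω)) ∂μ) := by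
        rw [lintegral_tsum fun n ↦ by fun_prop]
        congr 1 with n
        rw [ofReal_integral_eq_lintegral_ofReal ((hint n).const_mul _) (hnn n)]
    _ < ⊤ := by
        rw [← ENNReal.ofReal_tsum_of_nonneg (fun n ↦ integral_nonneg_of_ae (hnn n)) hsum]
        exact ENNReal.ofReal_lt_top

/-- Landau's theorem: a moment-generating function of a nonnegative variable cannot be analytically
continued past the right end point of its interval of finiteness. -/
lemma exists_lt_mem_integrableExpSet_of_analyticAt (hX : 0 ≤ᵐ[μ] X) {G : ℝ → ℝ} {a : ℝ}
    (hG : AnalyticAt ℝ G a) (hI : Iio a ⊆ integrableExpSet X μ) (hE : EqOn G (mgf X μ) (Iio a)) :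
    ∃ b, a < b ∧ b ∈ integrableExpSet X μ := by
  obtain ⟨p, R, hp⟩ := hG
  obtain ⟨r, hr0, hrR⟩ := ENNReal.lt_iff_exists_nnreal_btwn.1 hp.r_pos
  have hr : 0 < r := by exact_mod_cast hr0
  have hnn : ‖-((r : ℝ) / 4)‖₊ = r / 4 := by
    rw [nnnorm_neg]; ext; simp
  have hy : (‖-((r : ℝ) / 4)‖₊ : ℝ≥0∞) < R := by
    rw [hnn]
    refine lt_of_le_of_lt ?_ hrR
    exact_mod_cast (div_le_self hr.le (by norm_num) : r / 4 ≤ r)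
  have hca : a + -((r : ℝ) / 4) < a := by
    have : (0 : ℝ) < r := hr
    linarith
  have hs : ((r / 2 : ℝ≥0) : ℝ≥0∞) < R - ‖-((r : ℝ) / 4)‖₊ := by
    rw [hnn, lt_tsub_iff_right]
    refine lt_of_le_of_lt ?_ hrR
    rw [← ENNReal.coe_add, ENNReal.coe_le_coe, ← NNReal.coe_le_coe]
    push_cast
    linarith [r.coe_nonneg]
  refine ⟨_, ?_, integrable_exp_mul_of_hasFPowerSeriesOnBall hX
    (interior_maximal hI isOpen_Iio hca) (hp.changeOrigin hy)
    (hE.eventuallyEq_of_mem (Iio_mem_nhds hca)) hs⟩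
  have : (0 : ℝ) < r := hr
  push_cast
  linarith

/-- The moment-generating function of a nonnegative variable is finite, and equal to its analytic
continuation, wherever the latter exists. -/
lemma Iio_subset_integrableExpSet_of_analyticOnNhd (hX : 0 ≤ᵐ[μ] X) {G : ℝ → ℝ} {a b : ℝ}
    (hab : a ≤ b) (hG : AnalyticOnNhd ℝ G (Iio b)) (hI : Iio a ⊆ integrableExpSet X μ)
    (hE : EqOn G (mgf X μ) (Iio a)) :
    Iio b ⊆ integrableExpSet X μ ∧ EqOn G (mgf X μ) (Iio b) := by
  set T : Set ℝ := {s | s ≤ b ∧ Iio s ⊆ integrableExpSet X μ}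
  have haT : a ∈ T := ⟨hab, hI⟩
  have hbdd : BddAbove T := ⟨b, fun s hs ↦ hs.1⟩
  set σ := sSup T
  have haσ : a ≤ σ := le_csSup hbdd haT
  have hσb : σ ≤ b := csSup_le ⟨a, haT⟩ fun s hs ↦ hs.1
  have hIσ : Iio σ ⊆ integrableExpSet X μ := by
    intro s hs
    obtain ⟨t, ht, hst⟩ := exists_lt_of_lt_csSup ⟨a, haT⟩ hs
    exact ht.2 hst
  have hEσ : EqOn G (mgf X μ) (Iio σ) := by
    have ha : a - 1 < a := by linarith
    refine (hG.mono (Iio_subset_Iio hσb)).eqOn_of_preconnected_of_eventuallyEq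
      (fun s hs ↦ analyticAt_mgf (interior_maximal hIσ isOpen_Iio hs)) isPreconnected_Iio
      (ha.trans_le haσ) (hE.eventuallyEq_of_mem (Iio_mem_nhds ha))
  have hσ_eq : σ = b := by
    refine hσb.antisymm (not_lt.1 fun hlt ↦ ?_)
    obtain ⟨d, hσd, hd⟩ := exists_lt_mem_integrableExpSet_of_analyticAt hX (hG σ hlt) hIσ hEσ
    have hmem : min d b ∈ T := by
      refine ⟨min_le_right _ _, fun s hs ↦ ?_⟩
      have hσ' : min (σ - 1) s ∈ integrableExpSet X μ :=
        hIσ ((min_le_left _ _).trans_lt (sub_one_lt σ))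
      exact integrable_exp_mul_of_le_of_le hσ' hd (min_le_right _ _)
        (hs.le.trans (min_le_left _ _))
    exact (lt_min hσd hlt).not_ge (le_csSup hbdd hmem)
  exact hσ_eq ▸ ⟨hIσ, hEσ⟩

/-- A left limit of the moment-generating function forces the exponential moment to be finite. -/
lemma mem_integrableExpSet_of_tendsto_mgf (hXm : AEMeasurable X μ) {b L : ℝ}
    (hI : Iio b ⊆ integrableExpSet X μ) (hL : Tendsto (mgf X μ) (𝓝[<] b) (𝓝 L)) :
    b ∈ integrableExpSet X μ := by
  refine ⟨by fun_prop, ?_⟩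
  rw [hasFiniteIntegral_iff_ofReal (ae_of_all _ fun ω ↦ (Real.exp_pos _).le)]
  obtain ⟨u, -, hub, hu⟩ := exists_seq_strictMono_tendsto b
  have hu' : Tendsto u atTop (𝓝[<] b) :=
    tendsto_nhdsWithin_iff.2 ⟨hu, Eventually.of_forall hub⟩
  have hlim : Tendsto (fun n ↦ ∫⁻ ω, ENNReal.ofReal (Real.exp (u n * X ω)) ∂μ) atTop
      (𝓝 (ENNReal.ofReal L)) := by
    refine (ENNReal.tendsto_ofReal (hL.comp hu')).congr fun n ↦ ?_
    exact ofReal_integral_eq_lintegral_ofReal (hI (hub n))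
      (ae_of_all _ fun ω ↦ (Real.exp_pos _).le)
  calc ∫⁻ ω, ENNReal.ofReal (Real.exp (b * X ω)) ∂μ
      = ∫⁻ ω, liminf (fun n ↦ ENNReal.ofReal (Real.exp (u n * X ω))) atTop ∂μ := by
        refine lintegral_congr fun ω ↦ (Tendsto.liminf_eq ?_).symm
        exact ENNReal.tendsto_ofReal ((Real.continuous_exp.tendsto _).comp (hu.mul_const _))
    _ ≤ liminf (fun n ↦ ∫⁻ ω, ENNReal.ofReal (Real.exp (u n * X ω)) ∂μ) atTop :=
        lintegral_liminf_le' fun n ↦ by fun_prop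
    _ = ENNReal.ofReal L := hlim.liminf_eq
    _ < ⊤ := ENNReal.ofReal_lt_top

/-- The moment-generating function of a nonnegative variable is left-continuous at every point of
finiteness. -/
lemma tendsto_mgf_nhdsLT (hX : 0 ≤ᵐ[μ] X) (hXm : AEMeasurable X μ) {b : ℝ}
    (hb : b ∈ integrableExpSet X μ) : Tendsto (mgf X μ) (𝓝[<] b) (𝓝 (mgf X μ b)) := by
  refine tendsto_integral_filter_of_dominated_convergence (fun ω ↦ Real.exp (b * X ω))
    (Eventually.of_forall fun s ↦ by fun_prop) ?_ hb ?_
  · filter_upwards [self_mem_nhdsWithin] with s hs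
    filter_upwards [hX] with ω hω
    rw [Real.norm_of_nonneg (Real.exp_pos _).le]
    exact Real.exp_le_exp.2 (mul_le_mul_of_nonneg_right (le_of_lt hs) hω)
  · refine ae_of_all _ fun ω ↦ tendsto_nhdsWithin_of_tendsto_nhds ?_
    exact (by fun_prop : Continuous fun s ↦ Real.exp (s * X ω)).tendsto b

/-- For a measure on `[0, 1]` integrating `t`, the function `z ↦ ∫ (1 - e^{-zt})` is entire. -/
lemma differentiable_integral_one_sub_cexp {ν : Measure ℝ} (hν : ∀ᵐ t ∂ν, t ∈ Icc (0 : ℝ) 1)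
    (hint : Integrable (fun t : ℝ ↦ t) ν) :
    Differentiable ℂ fun z : ℂ ↦ ∫ t : ℝ, (1 - Complex.exp (-z * t)) ∂ν := by
  intro z
  have hF_int : Integrable (fun t : ℝ ↦ 1 - Complex.exp (-z * t)) ν := by
    refine (hint.const_mul (‖z‖ * Real.exp ‖z‖)).mono' (by fun_prop) ?_
    filter_upwards [hν] with t ht
    have h := Complex.norm_exp_sub_sum_le_norm_mul_exp (-z * t) 1
    simp only [Finset.sum_range_one, pow_zero, Nat.factorial_zero, Nat.cast_one, div_one, pow_one,
      norm_mul, norm_neg, Complex.norm_real, Real.norm_of_nonneg ht.1] at h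
    rw [norm_sub_rev]
    calc _ ≤ ‖z‖ * t * Real.exp (‖z‖ * t) := h
      _ ≤ ‖z‖ * t * Real.exp ‖z‖ := by
        have := ht.1
        gcongr
        exact mul_le_of_le_one_right (norm_nonneg _) ht.2
      _ = _ := by ring
  refine (hasDerivAt_integral_of_dominated_loc_of_deriv_le
    (F' := fun (w : ℂ) (t : ℝ) ↦ (t : ℂ) * Complex.exp (-w * t))
    (bound := fun t ↦ Real.exp (‖z‖ + 1) * t) (Metric.ball_mem_nhds z one_pos)
    (Eventually.of_forall fun w ↦ by fun_prop) hF_int (by fun_prop) ?_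
    (hint.const_mul _) (ae_of_all _ fun t w _ ↦ ?_)).2.differentiableAt
  · filter_upwards [hν] with t ht w hw
    have hw' : ‖w‖ ≤ ‖z‖ + 1 := by
      have h1 := norm_le_norm_add_norm_sub z w
      rw [mem_ball_iff_norm, norm_sub_rev] at hw
      linarith [norm_sub_rev z w]
    have h0 := ht.1
    rw [norm_mul, Complex.norm_real, Real.norm_of_nonneg ht.1, mul_comm]
    gcongr
    refine (Complex.norm_exp_le_exp_norm _).trans (Real.exp_le_exp.2 ?_)
    rw [norm_mul, norm_neg, Complex.norm_real, Real.norm_of_nonneg ht.1]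
    exact (mul_le_of_le_one_right (norm_nonneg _) ht.2).trans hw'
  · have h := ((((hasDerivAt_id w).neg.mul_const (t : ℂ))).cexp).const_sub 1
    convert! h using 1
    simp
    ring

lemma analyticAt_integral_one_sub_exp {ν : Measure ℝ} (hν : ∀ᵐ t ∂ν, t ∈ Icc (0 : ℝ) 1)
    (hint : Integrable (fun t : ℝ ↦ t) ν) (x : ℝ) :
    AnalyticAt ℝ (fun x : ℝ ↦ ∫ t : ℝ, (1 - Real.exp (-x * t)) ∂ν) x := by
  have h := ((differentiable_integral_one_sub_cexp hν hint).analyticAt (x : ℂ)).re_ofReal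
  convert! h using 1
  ext y
  rw [← Complex.ofReal_re (∫ t : ℝ, (1 - Real.exp (-y * t)) ∂ν), ← integral_complex_ofReal]
  simp

/-- The integral part of a Bernstein function, split into its small and large jumps. -/
lemma integral_one_sub_exp_eq_add_sub_mgf {ρ : Measure ℝ}
    (hsmall : Integrable (fun t : ℝ ↦ t) (ρ.restrict (Ioc 0 1)))
    [IsFiniteMeasure (ρ.restrict (Ioi 1))] {x : ℝ} (hx : 0 < x) :
    ∫ t in Ioi (0 : ℝ), (1 - Real.exp (-x * t)) ∂ρ =
      ∫ t in Ioc (0 : ℝ) 1, (1 - Real.exp (-x * t)) ∂ρ + (ρ.restrict (Ioi 1)).real univ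
        - mgf id (ρ.restrict (Ioi 1)) (-x) := by
  have hexp : Integrable (fun t : ℝ ↦ Real.exp (-x * t)) (ρ.restrict (Ioi 1)) := by
    refine (integrable_const (1 : ℝ)).mono' (by fun_prop) ?_
    filter_upwards [ae_restrict_mem measurableSet_Ioi] with t ht
    have ht1 : (1 : ℝ) < t := ht
    rw [Real.norm_of_nonneg (Real.exp_pos _).le, Real.exp_le_one_iff]
    nlinarith
  have hIoc : IntegrableOn (fun t : ℝ ↦ 1 - Real.exp (-x * t)) (Ioc 0 1) ρ := by
    refine (hsmall.const_mul x).mono' (by fun_prop) ?_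
    filter_upwards [ae_restrict_mem measurableSet_Ioc] with t ht
    have hle : Real.exp (-x * t) ≤ 1 := Real.exp_le_one_iff.2 (by nlinarith [ht.1])
    rw [Real.norm_of_nonneg (sub_nonneg.2 hle)]
    linarith [Real.add_one_le_exp (-x * t)]
  rw [← Ioc_union_Ioi_eq_Ioi (zero_le_one' ℝ), setIntegral_union
    (Set.disjoint_left.2 fun t ht ht' ↦ ht.2.not_gt ht') measurableSet_Ioi hIoc
    ((integrable_const _).sub hexp), integral_sub (integrable_const _) hexp]
  simp [mgf, add_sub_assoc]

/-- A Bernstein function is, up to a function analytic on the whole line, the Laplace transform of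
its large jumps. -/
lemma exists_analyticAt_eq_sub_mgf {ρ : Measure ℝ} (β : ℝ)
    (hsmall : Integrable (fun t : ℝ ↦ t) (ρ.restrict (Ioc 0 1)))
    [IsFiniteMeasure (ρ.restrict (Ioi 1))] :
    ∃ H : ℝ → ℝ, (∀ x, AnalyticAt ℝ H x) ∧ ∀ x, 0 < x →
      β * x + ∫ t in Ioi (0 : ℝ), (1 - Real.exp (-x * t)) ∂ρ =
        H x - mgf id (ρ.restrict (Ioi 1)) (-x) := by
  have hIcc : ∀ᵐ t ∂ρ.restrict (Ioc (0 : ℝ) 1), t ∈ Icc (0 : ℝ) 1 := by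
    filter_upwards [ae_restrict_mem measurableSet_Ioc] with t ht using Ioc_subset_Icc_self ht
  refine ⟨fun x ↦ β * x + ∫ t in Ioc (0 : ℝ) 1, (1 - Real.exp (-x * t)) ∂ρ +
    (ρ.restrict (Ioi 1)).real univ, fun x ↦ ?_, fun x hx ↦ ?_⟩
  · exact ((analyticAt_const.mul analyticAt_id).add
      (analyticAt_integral_one_sub_exp hIcc hsmall x)).add analyticAt_const
  · rw [integral_one_sub_exp_eq_add_sub_mgf hsmall hx]
    ring

lemma integrable_restrict_Ioc_of_lintegral_min {ρ : Measure ℝ}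
    (hρ : ∫⁻ t in Ioi (0 : ℝ), ENNReal.ofReal (min t 1) ∂ρ < ⊤) :
    Integrable (fun t : ℝ ↦ t) (ρ.restrict (Ioc 0 1)) := by
  refine ⟨by fun_prop, ?_⟩
  rw [hasFiniteIntegral_iff_ofReal
    (by filter_upwards [ae_restrict_mem measurableSet_Ioc] with t ht using ht.1.le)]
  refine lt_of_le_of_lt ?_ hρ
  calc ∫⁻ t in Ioc (0 : ℝ) 1, ENNReal.ofReal t ∂ρ
      = ∫⁻ t in Ioc (0 : ℝ) 1, ENNReal.ofReal (min t 1) ∂ρ :=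
        setLIntegral_congr_fun measurableSet_Ioc fun t ht ↦ by simp only [min_eq_left ht.2]
    _ ≤ _ := lintegral_mono_set Ioc_subset_Ioi_self

lemma isFiniteMeasure_restrict_Ioi_of_lintegral_min {ρ : Measure ℝ}
    (hρ : ∫⁻ t in Ioi (0 : ℝ), ENNReal.ofReal (min t 1) ∂ρ < ⊤) :
    IsFiniteMeasure (ρ.restrict (Ioi 1)) := by
  refine ⟨lt_of_le_of_lt ?_ hρ⟩
  calc ρ.restrict (Ioi 1) univ = ∫⁻ t in Ioi (1 : ℝ), ENNReal.ofReal (min t 1) ∂ρ := by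
        rw [← lintegral_one]
        refine setLIntegral_congr_fun measurableSet_Ioi fun t ht ↦ ?_
        simp only [min_eq_right (le_of_lt (mem_Ioi.1 ht)), ENNReal.ofReal_one]
    _ ≤ _ := lintegral_mono_set (Ioi_subset_Ioi zero_le_one)

/-- The set of finiteness of the moment-generating function of a nonnegative
variable is a lower set. -/
lemma Iic_subset_integrableExpSet (hX : 0 ≤ᵐ[μ] X) (hXm : AEMeasurable X μ) {b : ℝ}
    (hb : b ∈ integrableExpSet X μ) : Iic b ⊆ integrableExpSet X μ := by
  intro s hs
  refine Integrable.mono' hb (by fun_prop) ?_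
  filter_upwards [hX] with ω hω
  rw [Real.norm_of_nonneg (Real.exp_pos _).le]
  exact Real.exp_le_exp.2 (mul_le_mul_of_nonneg_right hs hω)

end LaplaceTransform

/-- Exponential moment characterization of real-analytic left extension of a Bernstein
function: `∫_{(1,∞)} e^{αt} ρ(dt) < ∞` iff `f` has a real-analytic extension onto `(-α, ∞)`
which is continuous up to `-α` (i.e. has a finite limit as `x → -α⁺`). -/
theorem bernstein_exponential_moment_iff_analytic_extension
    (β : ℝ) (hβ : 0 ≤ β)
    (ρ : Measure ℝ) (hρsupp : ρ (Set.Iic 0) = 0)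
    (hρint : ∫⁻ t in Set.Ioi (0 : ℝ), ENNReal.ofReal (min t 1) ∂ρ < ⊤)
    (f : ℝ → ℝ)
    (hf : ∀ lam : ℝ, 0 < lam →
      f lam = β * lam + ∫ t in Set.Ioi (0 : ℝ), (1 - Real.exp (-lam * t)) ∂ρ)
    (α : ℝ) (hα : 0 < α) :
    (∫⁻ t in Set.Ioi (1 : ℝ), ENNReal.ofReal (Real.exp (α * t)) ∂ρ < ⊤) ↔
    (∃ g : ℝ → ℝ,
      AnalyticOnNhd ℝ g (Set.Ioi (-α)) ∧
      (∀ lam : ℝ, 0 < lam → g lam = f lam) ∧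
      ∃ L : ℝ, Filter.Tendsto g (nhdsWithin (-α) (Set.Ioi (-α))) (nhds L)) := by
  open ProbabilityTheory Set Filter Topology in
  have := isFiniteMeasure_restrict_Ioi_of_lintegral_min hρint
  obtain ⟨H, hH, hfH⟩ :=
    exists_analyticAt_eq_sub_mgf β (integrable_restrict_Ioc_of_lintegral_min hρint)
  set μ := ρ.restrict (Ioi 1)
  have hX : 0 ≤ᵐ[μ] (id : ℝ → ℝ) := by
    filter_upwards [ae_restrict_mem measurableSet_Ioi] with t ht
    exact zero_le_one.trans (le_of_lt (mem_Ioi.1 ht))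
  have hXm : AEMeasurable (id : ℝ → ℝ) μ := aemeasurable_id
  have hmem : (∫⁻ t, ENNReal.ofReal (Real.exp (α * t)) ∂μ < ⊤) ↔ α ∈ integrableExpSet id μ := by
    rw [← hasFiniteIntegral_iff_ofReal (ae_of_all _ fun t ↦ (Real.exp_pos _).le)]
    exact ⟨fun h ↦ ⟨by fun_prop, h⟩, fun h ↦ h.2⟩
  rw [hmem]
  constructor
  · intro hα_mem
    have hI := Iic_subset_integrableExpSet hX hXm hα_mem
    refine ⟨fun x ↦ H x - mgf id μ (-x), fun x hx ↦ ?_, fun x hx ↦ ?_, H (-α) - mgf id μ α, ?_⟩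
    · have hx' : -x ∈ interior (integrableExpSet id μ) :=
        interior_maximal (Iio_subset_Iic_self.trans hI) isOpen_Iio (mem_Iio.2 (neg_lt.1 hx))
      exact (hH x).sub ((analyticAt_mgf hx').fun_comp analyticAt_id.neg)
    · rw [hf x hx, hfH x hx]
    · refine ((hH (-α)).continuousAt.tendsto.mono_left nhdsWithin_le_nhds).sub ?_
      exact (tendsto_mgf_nhdsLT hX hXm hα_mem).comp (by simpa using tendsto_neg_nhdsGT (a := -α))
  · rintro ⟨g, hg, hgf, L, hL⟩
    have hI : Iio (0 : ℝ) ⊆ integrableExpSet id μ :=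
      Iio_subset_Iic_self.trans (Iic_subset_integrableExpSet hX hXm (by simp [integrableExpSet]))
    obtain ⟨hIα, hE⟩ := Iio_subset_integrableExpSet_of_analyticOnNhd hX hα.le
      (G := fun s ↦ H (-s) - g (-s))
      (fun s hs ↦ ((hH (-s)).fun_comp analyticAt_id.neg).sub
        ((hg (-s) (mem_Ioi.2 (neg_lt_neg hs))).fun_comp analyticAt_id.neg)) hI
      (fun s hs ↦ by
        have hs' : 0 < -s := neg_pos.2 hs
        simp only [hgf _ hs', hf _ hs', hfH _ hs', sub_sub_cancel]
        rw [neg_neg])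
    refine mem_integrableExpSet_of_tendsto_mgf hXm hIα (L := H (-α) - L) ?_
    have hG : Tendsto (fun s ↦ H (-s) - g (-s)) (𝓝[<] α) (𝓝 (H (-α) - L)) :=
      ((hH (-α)).continuousAt.tendsto.mono_left nhdsWithin_le_nhds |>.sub hL).comp
        (tendsto_neg_nhdsLT (a := α))
    exact hG.congr' (eventually_nhdsWithin_of_forall hE)
end

section
/- Let n ≥ 1. Let p : ℤⁿ → [0,1] with p(0) = 0 and Σ_{ℓ∈ℤⁿ} p(ℓ) = 1, and assume the random walk is non-degenerate in the sense that the real linear span of {ℓ ∈ ℤⁿ : p(ℓ) > 0} is all of ℝⁿ. Let β ≥ 0 and let ρ be a measure on (0,∞) with ∫_{(0,∞)} min(t,1) ρ(dt) < ∞ which has no positive exponential moments: ∫_{(1,∞)} e^{αt} ρ(dt) = ∞ for every α > 0, and define f(z) = βz + ∫_{(0,∞)} (1 − e^{−zt}) ρ(dt) for z ∈ ℂ with Re z ≥ 0. Let ψ_R(ξ) = Σ_{ℓ∈ℤⁿ} p(ℓ)·(1 − e^{i ℓ·ξ}) for ξ ∈ ℝⁿ (note Re ψ_R(ξ) ≥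 0), and set ψ(ξ) = f(ψ_R(ξ)). If u, v : ℤⁿ → ℂ are finitely supported and Σ_{k∈ℤⁿ} v(k) e^{i k·ξ} = ψ(ξ) · Σ_{k∈ℤⁿ} u(k) e^{i k·ξ} for all ξ ∈ ℝⁿ, then u = 0. (Unique continuation for the subordinated discrete Lévy operator f(−A_R): if u and f(−A_R)u both vanish outside a bounded set, then u vanishes identically.) -/
open MeasureTheory
open Filter Topology Complex

theorem AnalyticAt.isBigO_symm_second_difference {E : Type*} [NormedAddCommGroup E]
    [NormedSpace ℝ E] {g : ℝ → E} (hg : AnalyticAt ℝ g 0) :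
    (fun h : ℝ => g h + g (-h) - (2 : ℝ) • g 0) =O[𝓝 0] fun h : ℝ => h ^ 2 := by
  obtain ⟨q, hq⟩ := hg
  have h1 : (fun h : ℝ => g h - q.partialSum 2 h) =O[𝓝 0] fun h : ℝ => h ^ 2 := by
    simpa using hq.isBigO_sub_partialSum_pow 2
  have hneg : Tendsto (fun h : ℝ => -h) (𝓝 0) (𝓝 0) := by
    simpa using (continuous_neg (G := ℝ)).tendsto 0
  have h2 : (fun h : ℝ => g (-h) - q.partialSum 2 (-h)) =O[𝓝 0] fun h : ℝ => h ^ 2 := by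
    simpa [Function.comp_def] using h1.comp_tendsto hneg
  refine (h1.add h2).congr_left fun h => ?_
  have h0 : q 0 (fun _ => h) = g 0 := hq.coeff_zero _
  have h0' : q 0 (fun _ => -h) = g 0 := hq.coeff_zero _
  have hodd : q 1 (fun _ => -h) = - q 1 (fun _ => h) := by
    simp
  simp only [FormalMultilinearSeries.partialSum, Finset.sum_range_succ, Finset.sum_range_zero,
    h0, h0', hodd, two_smul]
  abel

theorem tendsto_two_sub_two_cos_div_sq (y : ℝ) :
    Tendsto (fun h : ℝ => (2 - 2 * Real.cos (h * y)) / h ^ 2) (𝓝[≠] 0) (𝓝 (y ^ 2)) := by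
  have h1 : HasDerivAt (fun h : ℝ => 2 * Real.sin (h * y / 2)) y 0 := by
    have h0 : HasDerivAt (fun h : ℝ => h * y / 2) (y / 2) 0 := by
      simpa using ((hasDerivAt_id (0 : ℝ)).mul_const y).div_const 2
    have h1 := h0.sin.const_mul 2
    simp only [zero_mul, zero_div, Real.cos_zero, one_mul, mul_div_cancel₀ _ (two_ne_zero' ℝ)] at h1
    exact h1
  have h2 := (hasDerivAt_iff_tendsto_slope.mp h1).pow 2
  refine h2.congr fun h => ?_
  simp only [slope_def_field, zero_mul, zero_div, Real.sin_zero, mul_zero, sub_zero]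
  have hcos : Real.cos (h * y) = 2 * Real.cos (h * y / 2) ^ 2 - 1 := by
    rw [← Real.cos_two_mul]
    congr 1
    ring
  rw [div_pow, mul_pow, Real.sin_sq, hcos]
  ring

theorem memLp_id_even_of_lintegral {μ : Measure ℝ} [IsFiniteMeasure μ] {k : ℕ}
    (h : ∫⁻ y, ENNReal.ofReal (y ^ (2 * k)) ∂μ < ⊤) :
    MemLp id (2 * k : ℕ) μ := by
  rcases Nat.eq_zero_or_pos k with rfl | hk
  · simpa using (by fun_prop)
  rw [← integrable_norm_rpow_iff (by fun_prop) (by simp; omega)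
    (ENNReal.natCast_ne_top _)]
  have hpow : ∀ y : ℝ, ‖id y‖ ^ ((2 * k : ℕ) : ENNReal).toReal = y ^ (2 * k) := fun y => by
    rw [ENNReal.toReal_natCast, Real.rpow_natCast, pow_mul, pow_mul]
    simp
  simp only [hpow]
  refine ⟨by fun_prop, ?_⟩
  rw [hasFiniteIntegral_iff_ofReal (ae_of_all _ fun y => by rw [pow_mul]; positivity)]
  exact h

theorem AnalyticAt.memLp_id_succ_of_charFun {μ : Measure ℝ} [IsFiniteMeasure μ]
    (h : AnalyticAt ℝ (charFun μ) 0) {k : ℕ} (hk : MemLp id (2 * k : ℕ) μ) :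
    MemLp id (2 * (k + 1) : ℕ) μ := by
  apply memLp_id_even_of_lintegral
  have hint : Integrable (fun y : ℝ => y ^ (2 * k)) μ := by
    have := hk.integrable_norm_pow'
    refine this.congr (ae_of_all _ fun y => ?_)
    simp [pow_mul]
  have hG : AnalyticAt ℝ (iteratedDeriv (2 * k) (charFun μ)) 0 := by
    rw [iteratedDeriv_eq_iterate]
    exact h.iterated_deriv _
  have hO := hG.isBigO_symm_second_difference
  have hterm : ∀ t : ℝ, Integrable (fun y : ℝ => (y : ℂ) ^ (2 * k) * cexp (t * y * I)) μ := by
    intro t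
    refine (hint.norm).mono' (by fun_prop) (ae_of_all _ fun y => ?_)
    rw [norm_mul, ← ofReal_mul, norm_exp_ofReal_mul_I]
    simp
  have hdiff : ∀ t : ℝ, ‖iteratedDeriv (2 * k) (charFun μ) t + iteratedDeriv (2 * k) (charFun μ) (-t)
      - (2 : ℝ) • iteratedDeriv (2 * k) (charFun μ) 0‖
        = ∫ y, y ^ (2 * k) * (2 - 2 * Real.cos (t * y)) ∂μ := by
    intro t
    simp only [iteratedDeriv_charFun hk]
    rw [← mul_add, ← integral_add (hterm _) (hterm _), mul_comm, real_smul, mul_comm _ (I ^ _ * _),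
      mul_assoc (I ^ _), mul_comm (I ^ _), ← sub_mul, norm_mul, norm_pow, norm_I, one_pow, mul_one,
      ← integral_mul_const, ← integral_sub (by exact (hterm _).add (hterm _)) ((hterm _).mul_const _),
      ← norm_neg, ← integral_neg]
    have : ∀ y : ℝ, -(((y : ℂ) ^ (2 * k) * cexp (t * y * I) + (y : ℂ) ^ (2 * k) * cexp ((-t : ℝ) * y * I))
        - (y : ℂ) ^ (2 * k) * cexp ((0 : ℝ) * y * I) * (2 : ℝ))
        = ((y ^ (2 * k) * (2 - 2 * Real.cos (t * y)) : ℝ) : ℂ) := by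
      intro y
      push_cast
      rw [Complex.cos]
      simp
      ring_nf
    simp only [this]
    rw [integral_complex_ofReal, norm_real, Real.norm_of_nonneg]
    refine integral_nonneg fun y => ?_
    have := Real.cos_le_one (t * y)
    have h2 : 0 ≤ y ^ (2 * k) := by rw [pow_mul]; positivity
    have h3 : 0 ≤ 2 - 2 * Real.cos (t * y) := by linarith
    exact mul_nonneg h2 h3
  obtain ⟨C, hC⟩ := hO.bound
  have hintD : ∀ t : ℝ, Integrable (fun y : ℝ => y ^ (2 * k) * (2 - 2 * Real.cos (t * y)) / t ^ 2) μ := by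
    intro t
    refine (hint.mul_bdd (c := 4) (by fun_prop) (ae_of_all _ fun y => ?_)).div_const _
    rw [Real.norm_eq_abs, abs_le]
    constructor <;> linarith [Real.cos_le_one (t * y), Real.neg_one_le_cos (t * y)]
  have hbd : ∀ᶠ t : ℝ in 𝓝[≠] 0,
      ∫⁻ y, ENNReal.ofReal (y ^ (2 * k) * (2 - 2 * Real.cos (t * y)) / t ^ 2) ∂μ
        ≤ ENNReal.ofReal C := by
    filter_upwards [hC.filter_mono nhdsWithin_le_nhds, self_mem_nhdsWithin] with t ht ht0
    rw [← ofReal_integral_eq_lintegral_ofReal (hintD t), integral_div]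
    · apply ENNReal.ofReal_le_ofReal
      rw [hdiff t] at ht
      have : 0 < t ^ 2 := by have : t ≠ 0 := ht0; positivity
      rw [div_le_iff₀ this]
      simpa using ht
    · refine ae_of_all _ fun y => ?_
      have h1 := Real.cos_le_one (t * y)
      have h2 : 0 ≤ y ^ (2 * k) := by rw [pow_mul]; positivity
      have h3 : 0 ≤ 2 - 2 * Real.cos (t * y) := by linarith
      exact div_nonneg (mul_nonneg h2 h3) (sq_nonneg _)
  calc ∫⁻ y, ENNReal.ofReal (y ^ (2 * (k + 1))) ∂μ
      = ∫⁻ y, liminf (fun t : ℝ => ENNReal.ofReal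
          (y ^ (2 * k) * (2 - 2 * Real.cos (t * y)) / t ^ 2)) (𝓝[≠] 0) ∂μ := by
        refine lintegral_congr fun y => ((Tendsto.liminf_eq ?_)).symm
        refine (ENNReal.continuous_ofReal.tendsto _).comp ?_
        have := (tendsto_two_sub_two_cos_div_sq y).const_mul (y ^ (2 * k))
        simpa only [mul_div_assoc, mul_add, pow_add, mul_one] using this
    _ ≤ liminf (fun t : ℝ => ∫⁻ y, ENNReal.ofReal
          (y ^ (2 * k) * (2 - 2 * Real.cos (t * y)) / t ^ 2) ∂μ) (𝓝[≠] 0) :=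
        lintegral_liminf_le fun t => by fun_prop
    _ ≤ ENNReal.ofReal C := by
        refine liminf_le_of_frequently_le' hbd.frequently
    _ < ⊤ := ENNReal.ofReal_lt_top

/-- A finite measure whose characteristic function is analytic at the origin has some finite
exponential moment. -/
theorem AnalyticAt.exists_lintegral_cosh_lt_top {μ : Measure ℝ} [IsFiniteMeasure μ]
    (h : AnalyticAt ℝ (charFun μ) 0) :
    ∃ δ : ℝ, 0 < δ ∧ ∫⁻ y, ENNReal.ofReal (Real.cosh (δ * y)) ∂μ < ⊤ := by
  have hmem : ∀ k : ℕ, MemLp id (2 * k : ℕ) μ := by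
    intro k
    induction k with
    | zero => simpa using (by fun_prop)
    | succ k ih => exact h.memLp_id_succ_of_charFun ih
  obtain ⟨q, R, hq⟩ := h
  obtain ⟨r, hr0, hr⟩ := ENNReal.lt_iff_exists_nnreal_btwn.mp (hq.r_pos.trans_le hq.r_le)
  have hr0' : 0 < (r : ℝ) := by exact_mod_cast hr0
  have hs : Summable fun n : ℕ => ‖q n‖ * (r : ℝ) ^ n := q.summable_norm_mul_pow hr
  refine ⟨r, hr0', ?_⟩
  have hpos : ∀ (y : ℝ) (k : ℕ), 0 ≤ (r * y) ^ (2 * k) / ((2 * k).factorial : ℝ) := by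
    intro y k
    rw [pow_mul]
    positivity
  have hcosh : ∀ y : ℝ, ENNReal.ofReal (Real.cosh (r * y)) =
      ∑' k : ℕ, ENNReal.ofReal ((r * y) ^ (2 * k) / ((2 * k).factorial : ℝ)) := by
    intro y
    have := Real.hasSum_cosh (r * y)
    rw [← this.tsum_eq, ENNReal.ofReal_tsum_of_nonneg (hpos y) this.summable]
  simp only [hcosh]
  rw [lintegral_tsum fun k => by fun_prop]
  have hmoment : ∀ k : ℕ, ∫ y, y ^ (2 * k) ∂μ ≤ (2 * k).factorial * ‖q (2 * k)‖ := by
    intro k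
    have h1 : (2 * k).factorial • q (2 * k) (fun _ => (1 : ℝ)) =
        iteratedFDeriv ℝ (2 * k) (charFun μ) 0 (fun _ => (1 : ℝ)) := hq.factorial_smul 1 (2 * k)
    rw [← iteratedDeriv_eq_iteratedFDeriv, iteratedDeriv_charFun_zero (hmem k)] at h1
    have h2 := congrArg norm h1
    rw [norm_mul, norm_pow, norm_I, one_pow, one_mul, nsmul_eq_mul, norm_mul, norm_real,
      Real.norm_eq_abs, norm_natCast] at h2
    calc _ ≤ |∫ y, y ^ (2 * k) ∂μ| := le_abs_self _
      _ = _ := h2.symm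
      _ ≤ _ := by
        gcongr
        simp
  have hterm : ∀ k : ℕ, ∫⁻ y, ENNReal.ofReal ((r * y) ^ (2 * k) / ((2 * k).factorial : ℝ)) ∂μ
      ≤ ENNReal.ofReal (‖q (2 * k)‖ * (r : ℝ) ^ (2 * k)) := by
    intro k
    have hint : Integrable (fun y : ℝ => y ^ (2 * k)) μ := by
      refine (hmem k).integrable_norm_pow'.congr (ae_of_all _ fun y => ?_)
      simp [pow_mul]
    have hint' : Integrable (fun y : ℝ => (r * y) ^ (2 * k) / ((2 * k).factorial : ℝ)) μ := by
      simp only [mul_pow]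
      exact (hint.const_mul _).div_const _
    rw [← ofReal_integral_eq_lintegral_ofReal hint' (ae_of_all _ fun y => hpos y k)]
    apply ENNReal.ofReal_le_ofReal
    simp only [mul_pow]
    rw [integral_div, integral_const_mul, div_le_iff₀ (by positivity)]
    calc _ ≤ (r : ℝ) ^ (2 * k) * ((2 * k).factorial * ‖q (2 * k)‖) := by
          gcongr
          exact hmoment k
      _ = _ := by ring
  refine (ENNReal.tsum_le_tsum hterm).trans_lt ?_
  have hinj : Function.Injective fun k : ℕ => 2 * k := fun a b hab => by
    simpa using hab
  exact (hs.comp_injective hinj).tsum_ofReal_lt_top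

/-- A continuous factor of an analytic function by a not identically vanishing analytic function
is analytic. -/
theorem AnalyticAt.of_mul_eq {𝕜 : Type*} [NontriviallyNormedField 𝕜] {𝕜' : Type*}
    [NontriviallyNormedField 𝕜'] [NormedAlgebra 𝕜 𝕜'] {U V h : 𝕜 → 𝕜'} {x : 𝕜}
    (hU : AnalyticAt 𝕜 U x) (hV : AnalyticAt 𝕜 V x) (hh : ContinuousAt h x)
    (hU0 : ¬ ∀ᶠ t in 𝓝 x, U t = 0) (heq : ∀ᶠ t in 𝓝 x, V t = h t * U t) :
    AnalyticAt 𝕜 h x := by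
  obtain ⟨n, U₁, hU₁, hU₁x, hUeq⟩ := hU.exists_eventuallyEq_pow_smul_nonzero_iff.mpr hU0
  have key : ∀ H : 𝕜 → 𝕜', AnalyticAt 𝕜 H x → (∀ᶠ t in 𝓝 x, V t = H t * U t) →
      AnalyticAt 𝕜 h x := by
    intro H hH hHeq
    refine hH.congr ?_
    have hne : ∀ᶠ t in 𝓝[≠] x, h t = H t := by
      filter_upwards [heq.filter_mono nhdsWithin_le_nhds, hHeq.filter_mono nhdsWithin_le_nhds,
        hUeq.filter_mono nhdsWithin_le_nhds,
        (hU₁.continuousAt.eventually_ne hU₁x).filter_mono nhdsWithin_le_nhds,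
        self_mem_nhdsWithin] with t h1 h2 h3 h4 h5
      have hUt : U t ≠ 0 := by
        rw [h3]
        exact smul_ne_zero (pow_ne_zero _ (sub_ne_zero.mpr h5)) h4
      exact mul_right_cancel₀ hUt (h1.symm.trans h2)
    have hx : h x = H x := tendsto_nhds_unique_of_eventuallyEq
      (hh.tendsto.mono_left nhdsWithin_le_nhds)
      (hH.continuousAt.tendsto.mono_left nhdsWithin_le_nhds) hne
    filter_upwards [eventually_nhdsWithin_iff.mp hne] with t ht
    rcases eq_or_ne t x with rfl | htx
    exacts [hx.symm, (ht htx).symm]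
  by_cases hV0 : ∀ᶠ t in 𝓝 x, V t = 0
  · exact key 0 analyticAt_const (by simpa using hV0)
  obtain ⟨m, V₁, hV₁, hV₁x, hVeq⟩ := hV.exists_eventuallyEq_pow_smul_nonzero_iff.mpr hV0
  rcases lt_or_ge m n with hmn | hmn
  · exfalso
    have hlim : Tendsto (fun t => h t * ((t - x) ^ (n - m) • U₁ t)) (𝓝[≠] x) (𝓝 0) := by
      have : ContinuousAt (fun t => h t * ((t - x) ^ (n - m) • U₁ t)) x :=
        hh.mul (((continuousAt_id.sub continuousAt_const).pow _).smul hU₁.continuousAt)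
      have h0 := this.tendsto.mono_left (nhdsWithin_le_nhds (s := {x}ᶜ))
      simpa [Nat.sub_ne_zero_of_lt hmn] using h0
    refine hV₁x (tendsto_nhds_unique_of_eventuallyEq
      (hV₁.continuousAt.tendsto.mono_left nhdsWithin_le_nhds) hlim ?_)
    filter_upwards [heq.filter_mono nhdsWithin_le_nhds, hVeq.filter_mono nhdsWithin_le_nhds,
      hUeq.filter_mono nhdsWithin_le_nhds, self_mem_nhdsWithin] with t h1 h2 h3 h5
    have htx : (t - x) ^ m ≠ 0 := pow_ne_zero _ (sub_ne_zero.mpr h5)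
    rw [← Nat.sub_add_cancel hmn.le, pow_add, mul_smul, smul_comm] at h3
    rw [h2, h3, mul_smul_comm] at h1
    exact smul_right_injective _ htx h1
  · refine key (fun t => ((t - x) ^ (m - n) • V₁ t) * (U₁ t)⁻¹) ?_ ?_
    · exact (((analyticAt_id.sub analyticAt_const).pow _).smul hV₁).mul (hU₁.inv hU₁x)
    · filter_upwards [hVeq, hUeq, hU₁.continuousAt.eventually_ne hU₁x] with t h2 h3 h4
      rw [h2, h3, ← Nat.sub_add_cancel hmn, pow_add, mul_smul, Nat.sub_add_cancel hmn,
        mul_smul_comm, mul_assoc, inv_mul_cancel₀ h4, mul_one, smul_comm]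

theorem exists_injective_linear_form (n : ℕ) :
    ∃ η : Fin n → ℝ, ∀ ℓ : Fin n → ℤ, ∑ i, (ℓ i : ℝ) * η i = 0 → ℓ = 0 := by
  refine ⟨fun i => liouvilleNumber 2 ^ (i : ℕ), fun ℓ hℓ => ?_⟩
  have ht : Transcendental ℤ (liouvilleNumber 2) := by
    simpa using transcendental_liouvilleNumber (m := 2) le_rfl
  let P : Polynomial ℤ := ∑ i : Fin n, Polynomial.monomial (i : ℕ) (ℓ i)
  have hP : P = 0 := by
    refine transcendental_iff.mp ht P ?_
    simpa [P, map_sum, Polynomial.aeval_monomial] using hℓ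
  funext i
  have := congrArg (fun Q => Polynomial.coeff Q i) hP
  simpa [P, Polynomial.finsetSum_coeff, Polynomial.coeff_monomial, Fin.val_inj] using this

/-- Exponentials with distinct frequencies are linearly independent. -/
theorem linearIndependent_cexp_mul_I :
    LinearIndependent ℂ (fun (a : ℝ) (t : ℝ) => cexp (a * t * I)) := by
  let χ : ℝ → (Multiplicative ℝ →* ℂ) := fun a =>
    { toFun := fun t => cexp (a * (t.toAdd : ℝ) * I)
      map_one' := by simp
      map_mul' := fun s t => by simp [← Complex.exp_add]; ring_nf }
  have hχ : Function.Injective χ := by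
    intro a b hab
    have hab' : ∀ t : ℝ, cexp (a * t * I) = cexp (b * t * I) := fun t =>
      DFunLike.congr_fun hab (Multiplicative.ofAdd t)
    have hd : ∀ c : ℝ, HasDerivAt (fun t : ℝ => cexp (c * t * I)) (c * I) 0 := by
      intro c
      have h0 : HasDerivAt (fun t : ℝ => (c * t * I : ℂ)) (c * I) 0 := by
        simpa using (((hasDerivAt_id (0 : ℝ)).ofReal_comp.const_mul (c : ℂ)).mul_const I)
      simpa using h0.cexp
    have h1 := (hd a).unique (by simpa only [hab'] using hd b)
    exact_mod_cast mul_right_cancel₀ I_ne_zero h1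
  exact (linearIndependent_monoidHom (Multiplicative ℝ) ℂ).comp χ hχ

/-- The `m`-fold convolution power of a measure on the line. -/
noncomputable def convPow (P : Measure ℝ) : ℕ → Measure ℝ
  | 0 => Measure.dirac 0
  | m + 1 => P.conv (convPow P m)

instance isProbabilityMeasure_convPow (P : Measure ℝ) [IsProbabilityMeasure P] (m : ℕ) :
    IsProbabilityMeasure (convPow P m) := by
  induction m with
  | zero => rw [convPow]; infer_instance
  | succ m ih => rw [convPow]; infer_instance

theorem charFun_convPow (P : Measure ℝ) [IsProbabilityMeasure P] (m : ℕ) (t : ℝ) :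
    charFun (convPow P m) t = charFun P t ^ m := by
  induction m with
  | zero => simp [convPow]
  | succ m ih => rw [convPow, charFun_conv, ih, pow_succ']

theorem lintegral_exp_convPow (P : Measure ℝ) [IsProbabilityMeasure P] (m : ℕ) (t : ℝ) :
    ∫⁻ y, ENNReal.ofReal (Real.exp (t * y)) ∂(convPow P m)
      = (∫⁻ y, ENNReal.ofReal (Real.exp (t * y)) ∂P) ^ m := by
  induction m with
  | zero => simp [convPow]
  | succ m ih =>
    rw [convPow, Measure.lintegral_conv (by fun_prop)]
    simp only [mul_add, Real.exp_add, ENNReal.ofReal_mul (Real.exp_pos _).le]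
    simp_rw [lintegral_const_mul _ (show Measurable fun y : ℝ => ENNReal.ofReal (Real.exp (t * y))
      by fun_prop)]
    rw [lintegral_mul_const _ (by fun_prop), ih, pow_succ']

/-- The total mass that the mixed Poisson law with mixing measure `ν` gives to `m`. -/
noncomputable def mixedPoissonWeight (ν : Measure ℝ) (m : ℕ) : ENNReal :=
  ∫⁻ s, ENNReal.ofReal (Real.exp (-s) * (s ^ m / m.factorial)) ∂ν

/-- The Lévy measure of the random walk with step law `P`, subordinated by a subordinator with
drift `β` and Lévy measure `ν`; zero steps are not discarded. -/
noncomputable def subordinatedLevyMeasure (P : Measure ℝ) (β : ℝ) (ν : Measure ℝ) : Measure ℝ :=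
  ENNReal.ofReal β • P + Measure.sum fun m : ℕ => mixedPoissonWeight ν (m + 1) • convPow P (m + 1)

theorem hasSum_pow_succ_div_factorial (z : ℂ) :
    HasSum (fun m : ℕ => z ^ (m + 1) / ((m + 1).factorial : ℂ)) (cexp z - 1) := by
  have h := NormedSpace.expSeries_div_hasSum_exp z
  rw [← Complex.exp_eq_exp_ℂ] at h
  simpa using (hasSum_nat_add_iff' 1).mpr h

theorem Real.hasSum_pow_succ_div_factorial (x : ℝ) :
    HasSum (fun m : ℕ => x ^ (m + 1) / ((m + 1).factorial : ℝ)) (Real.exp x - 1) := by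
  have h := NormedSpace.expSeries_div_hasSum_exp x
  rw [← Real.exp_eq_exp_ℝ] at h
  simpa using (hasSum_nat_add_iff' 1).mpr h

section

variable {ν : Measure ℝ}

theorem tsum_mixedPoissonWeight_mul_pow (hν : ∀ᵐ s ∂ν, 0 < s) {w : ℝ} (hw : 0 ≤ w) :
    ∑' m : ℕ, mixedPoissonWeight ν (m + 1) * ENNReal.ofReal w ^ (m + 1)
      = ∫⁻ s, ENNReal.ofReal (Real.exp (-s) * (Real.exp (w * s) - 1)) ∂ν := by
  simp only [mixedPoissonWeight]
  have hmeas : ∀ m : ℕ, Measurable fun s : ℝ =>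
      ENNReal.ofReal (Real.exp (-s) * (s ^ m / m.factorial)) := fun m => by fun_prop
  simp_rw [← lintegral_mul_const _ (hmeas _)]
  rw [← lintegral_tsum fun m => by fun_prop]
  refine lintegral_congr_ae ?_
  filter_upwards [hν] with s hs
  have h := (Real.hasSum_pow_succ_div_factorial (w * s)).mul_left (Real.exp (-s))
  rw [← h.tsum_eq, ENNReal.ofReal_tsum_of_nonneg (fun m => by positivity) h.summable]
  refine tsum_congr fun m => ?_
  rw [← ENNReal.ofReal_pow hw, ← ENNReal.ofReal_mul (by positivity)]
  congr 1
  rw [mul_pow]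
  ring

theorem one_sub_exp_neg_le_min (s : ℝ) : 1 - Real.exp (-s) ≤ min s 1 := by
  refine le_min ?_ ?_
  · linarith [Real.add_one_le_exp (-s)]
  · linarith [Real.exp_pos (-s)]

theorem integrable_one_sub_exp_neg
    (hν : ∀ᵐ s ∂ν, 0 < s) (hint : ∫⁻ s, ENNReal.ofReal (min s 1) ∂ν < ⊤) :
    Integrable (fun s : ℝ => 1 - Real.exp (-s)) ν := by
  refine ⟨by fun_prop, ?_⟩
  rw [hasFiniteIntegral_iff_ofReal]
  · exact (lintegral_mono fun s => ENNReal.ofReal_le_ofReal (one_sub_exp_neg_le_min s)).trans_lt hint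
  · filter_upwards [hν] with s hs
    simpa using hs.le

theorem tsum_mixedPoissonWeight_lt_top
    (hν : ∀ᵐ s ∂ν, 0 < s) (hint : ∫⁻ s, ENNReal.ofReal (min s 1) ∂ν < ⊤) :
    ∑' m : ℕ, mixedPoissonWeight ν (m + 1) < ⊤ := by
  have h := tsum_mixedPoissonWeight_mul_pow hν zero_le_one
  simp only [ENNReal.ofReal_one, one_pow, mul_one, one_mul, mul_sub, ← Real.exp_add,
    neg_add_cancel, Real.exp_zero] at h
  rw [h]
  exact (lintegral_mono fun s => ENNReal.ofReal_le_ofReal (one_sub_exp_neg_le_min s)).trans_lt hint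

theorem integrable_exp_neg_mul_cexp_sub_one
    (hν : ∀ᵐ s ∂ν, 0 < s) (hint : ∫⁻ s, ENNReal.ofReal (min s 1) ∂ν < ⊤)
    {w : ℂ} (hw : ‖w‖ ≤ 1) :
    Integrable (fun s : ℝ => (Real.exp (-s) : ℂ) * (cexp (w * s) - 1)) ν := by
  refine (integrable_one_sub_exp_neg hν hint).mono' (by fun_prop) ?_
  filter_upwards [hν] with s hs
  have h1 : ‖cexp (w * s) - 1‖ ≤ Real.exp s - 1 := by
    calc _ ≤ Real.exp ‖w * s‖ - 1 := by
          simpa using Complex.norm_exp_sub_sum_le_exp_norm_sub_sum (w * s) 1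
      _ ≤ _ := by
          gcongr
          rw [norm_mul, norm_real, Real.norm_of_nonneg hs.le]
          exact mul_le_of_le_one_left hs.le hw
  rw [norm_mul, norm_real, Real.norm_of_nonneg (Real.exp_pos _).le]
  calc _ ≤ Real.exp (-s) * (Real.exp s - 1) := by gcongr
    _ = _ := by rw [mul_sub, ← Real.exp_add]; simp

theorem hasSum_mixedPoissonWeight_mul_pow
    (hν : ∀ᵐ s ∂ν, 0 < s) (hint : ∫⁻ s, ENNReal.ofReal (min s 1) ∂ν < ⊤)
    {w : ℂ} (hw : ‖w‖ ≤ 1) :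
    HasSum (fun m : ℕ => ((mixedPoissonWeight ν (m + 1)).toReal : ℂ) * w ^ (m + 1))
      (∫ s, (Real.exp (-s) : ℂ) * (cexp (w * s) - 1) ∂ν) := by
  have hfin := tsum_mixedPoissonWeight_lt_top hν hint
  have hpos : ∀ m : ℕ, 0 ≤ᵐ[ν] fun s : ℝ => Real.exp (-s) * (s ^ m / m.factorial) := fun m => by
    filter_upwards [hν] with s hs
    positivity
  have hterm : ∀ m : ℕ, Integrable
      (fun s : ℝ => Real.exp (-s) * (s ^ (m + 1) / (m + 1).factorial)) ν := by
    intro m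
    refine ⟨by fun_prop, ?_⟩
    rw [hasFiniteIntegral_iff_ofReal (hpos _)]
    exact (ENNReal.le_tsum m).trans_lt hfin
  have hval : ∀ m : ℕ, (mixedPoissonWeight ν (m + 1)).toReal
      = ∫ s, Real.exp (-s) * (s ^ (m + 1) / (m + 1).factorial) ∂ν := fun m => by
    rw [integral_eq_lintegral_of_nonneg_ae (hpos _) (by fun_prop), mixedPoissonWeight]
  have hS := hasSum_integral_of_summable_integral_norm (μ := ν)
    (F := fun (m : ℕ) (s : ℝ) =>
      ((Real.exp (-s) * (s ^ (m + 1) / (m + 1).factorial) : ℝ) : ℂ) * w ^ (m + 1))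
    (fun m => (hterm m).ofReal.mul_const _) ?_
  · have hval' : ∀ m : ℕ, ∫ s, ((Real.exp (-s) * (s ^ (m + 1) / (m + 1).factorial) : ℝ) : ℂ)
        * w ^ (m + 1) ∂ν = ((mixedPoissonWeight ν (m + 1)).toReal : ℂ) * w ^ (m + 1) := fun m => by
      rw [integral_mul_const, integral_complex_ofReal, hval]
    have hlim : ∫ s, ∑' m : ℕ, ((Real.exp (-s) * (s ^ (m + 1) / (m + 1).factorial) : ℝ) : ℂ)
        * w ^ (m + 1) ∂ν = ∫ s, (Real.exp (-s) : ℂ) * (cexp (w * s) - 1) ∂ν := by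
      refine integral_congr_ae (ae_of_all _ fun s => ?_)
      have := (hasSum_pow_succ_div_factorial (w * s)).mul_left (Real.exp (-s) : ℂ)
      simp only
      rw [← this.tsum_eq]
      refine tsum_congr fun m => ?_
      push_cast
      rw [mul_pow]
      ring
    simpa only [hval', hlim] using hS
  · refine Summable.of_nonneg_of_le (fun m => integral_nonneg fun s => norm_nonneg _) (fun m => ?_)
      (ENNReal.summable_toReal hfin.ne)
    rw [hval]
    refine integral_mono_ae ((hterm m).ofReal.mul_const _).norm (hterm m) ?_
    filter_upwards [hpos (m + 1)] with s hs
    rw [norm_mul, norm_real, Real.norm_of_nonneg hs, norm_pow]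
    exact mul_le_of_le_one_right hs (pow_le_one₀ (norm_nonneg _) hw)

theorem isFiniteMeasure_subordinatedLevyMeasure
    (hν : ∀ᵐ s ∂ν, 0 < s) (hint : ∫⁻ s, ENNReal.ofReal (min s 1) ∂ν < ⊤)
    (P : Measure ℝ) [IsProbabilityMeasure P] (β : ℝ) :
    IsFiniteMeasure (subordinatedLevyMeasure P β ν) := by
  refine ⟨?_⟩
  simp [subordinatedLevyMeasure, tsum_mixedPoissonWeight_lt_top hν hint]

/-- The Lévy–Khintchine formula for a subordinated random walk. -/
theorem charFun_subordinatedLevyMeasure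
    (hν : ∀ᵐ s ∂ν, 0 < s) (hint : ∫⁻ s, ENNReal.ofReal (min s 1) ∂ν < ⊤)
    (P : Measure ℝ) [IsProbabilityMeasure P] {β : ℝ}
    (hβ : 0 ≤ β) (t : ℝ) :
    charFun (subordinatedLevyMeasure P β ν) t = (β + ∫ s, (1 - Real.exp (-s)) ∂ν : ℝ)
      - (β * (1 - charFun P t) + ∫ s, (1 - cexp (-((1 - charFun P t) * s))) ∂ν) := by
  have hfm := isFiniteMeasure_subordinatedLevyMeasure hν hint P β
  have hw : ‖charFun P t‖ ≤ 1 := norm_charFun_le_one t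
  have hint_exp : Integrable (fun y : ℝ => cexp (t * y * I)) (subordinatedLevyMeasure P β ν) := by
    refine Integrable.of_bound (C := 1) (by fun_prop) (ae_of_all _ fun y => ?_)
    rw [← ofReal_mul, norm_exp_ofReal_mul_I]
  have hsub : ∫ s, (1 - cexp (-((1 - charFun P t) * s))) ∂ν
      = (∫ s, (1 - Real.exp (-s)) ∂ν : ℝ)
        - ∫ s, (Real.exp (-s) : ℂ) * (cexp (charFun P t * s) - 1) ∂ν := by
    have h1 : Integrable (fun s : ℝ => ((1 - Real.exp (-s) : ℝ) : ℂ)) ν :=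
      (integrable_one_sub_exp_neg hν hint).ofReal
    rw [← integral_complex_ofReal, ← integral_sub h1
      (integrable_exp_neg_mul_cexp_sub_one hν hint hw)]
    refine integral_congr_ae (ae_of_all _ fun s => ?_)
    simp only
    push_cast
    rw [mul_sub, ← Complex.exp_add]
    ring_nf
  rw [hsub, charFun_apply_real]
  unfold subordinatedLevyMeasure at hint_exp ⊢
  rw [integral_add_measure hint_exp.left_of_add_measure hint_exp.right_of_add_measure,
    integral_smul_measure, integral_sum_measure hint_exp.right_of_add_measure, ← charFun_apply_real,
    ← (hasSum_mixedPoissonWeight_mul_pow hν hint hw).tsum_eq, ENNReal.toReal_ofReal hβ]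
  simp only [integral_smul_measure, ← charFun_apply_real, charFun_convPow, real_smul]
  push_cast
  ring

theorem one_lt_lintegral_exp_or (P : Measure ℝ) [IsProbabilityMeasure P] (hP : P {0}ᶜ ≠ 0)
    {δ : ℝ} (hδ : δ ≠ 0) :
    1 < ∫⁻ y, ENNReal.ofReal (Real.exp (δ * y)) ∂P ∨
      1 < ∫⁻ y, ENNReal.ofReal (Real.exp (-δ * y)) ∂P := by
  by_contra! hcon
  have hcosh : ∀ y : ℝ, ENNReal.ofReal (Real.exp (δ * y)) + ENNReal.ofReal (Real.exp (-δ * y))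
      = ENNReal.ofReal (2 * (Real.cosh (δ * y) - 1)) + 2 := by
    intro y
    have h2 : (2 : ENNReal) = ENNReal.ofReal 2 := by simp
    rw [← ENNReal.ofReal_add (Real.exp_pos _).le (Real.exp_pos _).le, h2, ← ENNReal.ofReal_add
      (by linarith [Real.one_le_cosh (δ * y)]) zero_le_two, Real.cosh_eq]
    congr 1
    ring_nf
  have hle : ∫⁻ y, ENNReal.ofReal (2 * (Real.cosh (δ * y) - 1)) ∂P + 2 ≤ 2 := by
    calc _ = ∫⁻ y, (ENNReal.ofReal (2 * (Real.cosh (δ * y) - 1)) + 2) ∂P := by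
          rw [lintegral_add_right _ measurable_const]; simp
      _ = _ := by simp_rw [← hcosh]; exact lintegral_add_left (by fun_prop) _
      _ ≤ 1 + 1 := add_le_add hcon.1 hcon.2
      _ = 2 := by norm_num
  have hzero : ∫⁻ y, ENNReal.ofReal (2 * (Real.cosh (δ * y) - 1)) ∂P = 0 := by
    by_contra h
    exact absurd hle (not_le.mpr (by
      rw [add_comm]; exact ENNReal.lt_add_right ENNReal.ofNat_ne_top h))
  rw [lintegral_eq_zero_iff (by fun_prop)] at hzero
  refine hP (measure_mono_null (fun y hy => ?_) hzero)
  have h1 : 1 < Real.cosh (δ * y) := Real.one_lt_cosh.mpr (mul_ne_zero hδ hy)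
  simpa using h1

theorem tsum_mixedPoissonWeight_mul_pow_eq_top
    (hν : ∀ᵐ s ∂ν, 0 < s)
    (hnoexp : ∀ α : ℝ, 0 < α →
      ∫⁻ s in Set.Ioi (1 : ℝ), ENNReal.ofReal (Real.exp (α * s)) ∂ν = ⊤)
    {M : ENNReal} (hM : 1 < M) :
    ∑' m : ℕ, mixedPoissonWeight ν (m + 1) * M ^ (m + 1) = ⊤ := by
  obtain ⟨w, hw1, hwM⟩ := ENNReal.lt_iff_exists_nnreal_btwn.mp hM
  have hw1' : (1 : ℝ) < w := by exact_mod_cast hw1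
  rw [eq_top_iff]
  calc (⊤ : ENNReal)
      = ENNReal.ofReal (1 / 2) *
          ∫⁻ s in Set.Ioi (1 : ℝ), ENNReal.ofReal (Real.exp ((w - 1) * s)) ∂ν := by
        rw [hnoexp _ (sub_pos.mpr hw1'), ENNReal.mul_top (by simp)]
    _ = ∫⁻ s in Set.Ioi (1 : ℝ), ENNReal.ofReal (1 / 2 * Real.exp ((w - 1) * s)) ∂ν := by
        rw [← lintegral_const_mul _ (by fun_prop)]
        simp_rw [ENNReal.ofReal_mul (show (0 : ℝ) ≤ 1 / 2 by norm_num)]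
    _ ≤ ∫⁻ s in Set.Ioi (1 : ℝ), ENNReal.ofReal (Real.exp (-s) * (Real.exp (w * s) - 1)) ∂ν := by
        refine setLIntegral_mono (by fun_prop) fun s hs => ENNReal.ofReal_le_ofReal ?_
        have hs1 : 1 < s := hs
        have h1 : Real.exp (-s) * (Real.exp (w * s) - 1) =
            Real.exp ((w - 1) * s) - Real.exp (-s) := by
          rw [mul_sub, ← Real.exp_add]; ring_nf
        have h2 : 1 ≤ Real.exp ((w - 1) * s) :=
          Real.one_le_exp (mul_nonneg (by linarith) (by linarith))
        have h3 : Real.exp (-s) * Real.exp s = 1 := by rw [← Real.exp_add]; simp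
        nlinarith [Real.add_one_le_exp s, Real.exp_pos (-s)]
    _ ≤ ∫⁻ s, ENNReal.ofReal (Real.exp (-s) * (Real.exp (w * s) - 1)) ∂ν :=
        setLIntegral_le_lintegral _ _
    _ = ∑' m : ℕ, mixedPoissonWeight ν (m + 1) * ENNReal.ofReal w ^ (m + 1) :=
        (tsum_mixedPoissonWeight_mul_pow hν w.coe_nonneg).symm
    _ ≤ _ := by
        gcongr
        simpa using hwM.le

theorem lintegral_cosh_subordinatedLevyMeasure
    (hν : ∀ᵐ s ∂ν, 0 < s)
    (P : Measure ℝ) [IsProbabilityMeasure P]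
    (hP : P {0}ᶜ ≠ 0) (β : ℝ)
    (hnoexp : ∀ α : ℝ, 0 < α →
      ∫⁻ s in Set.Ioi (1 : ℝ), ENNReal.ofReal (Real.exp (α * s)) ∂ν = ⊤)
    {δ : ℝ} (hδ : δ ≠ 0) :
    ∫⁻ y, ENNReal.ofReal (Real.cosh (δ * y)) ∂(subordinatedLevyMeasure P β ν) = ⊤ := by
  have hexp : ∀ c : ℝ, 1 < ∫⁻ y, ENNReal.ofReal (Real.exp (c * y)) ∂P →
      ∫⁻ y, ENNReal.ofReal (Real.exp (c * y)) ∂(subordinatedLevyMeasure P β ν) = ⊤ := by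
    intro c hc
    simp [subordinatedLevyMeasure, lintegral_sum_measure, lintegral_exp_convPow,
      tsum_mixedPoissonWeight_mul_pow_eq_top hν hnoexp hc]
  have hle : ∀ c : ℝ, |c| = |δ| →
      ∫⁻ y, ENNReal.ofReal (Real.exp (c * y)) ∂(subordinatedLevyMeasure P β ν)
        ≤ 2 * ∫⁻ y, ENNReal.ofReal (Real.cosh (δ * y)) ∂(subordinatedLevyMeasure P β ν) := by
    intro c hc
    rw [← lintegral_const_mul _ (by fun_prop)]
    refine lintegral_mono fun y => ?_
    have h2 : (2 : ENNReal) = ENNReal.ofReal 2 := by simp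
    rw [h2, ← ENNReal.ofReal_mul zero_le_two]
    apply ENNReal.ofReal_le_ofReal
    rw [← Real.cosh_abs (δ * y), abs_mul, ← hc, ← abs_mul, Real.cosh_abs, Real.cosh_eq]
    linarith [Real.exp_pos (-(c * y))]
  by_contra hcon
  have hlt : 2 * ∫⁻ y, ENNReal.ofReal (Real.cosh (δ * y)) ∂(subordinatedLevyMeasure P β ν) ≠ ⊤ :=
    ENNReal.mul_ne_top ENNReal.ofNat_ne_top hcon
  rcases one_lt_lintegral_exp_or P hP hδ with h | h
  · exact hlt (top_le_iff.mp ((hexp _ h).symm.le.trans (hle _ rfl)))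
  · exact hlt (top_le_iff.mp ((hexp _ h).symm.le.trans (hle _ (abs_neg δ))))

end

/-- Unique continuation for the subordinated discrete Lévy operator `f(-A_R)`: if the
subordinator's Lévy measure `ρ` has no positive exponential moments, the random walk is
non-degenerate, and `u`, `v = f(-A_R)u` are finitely supported sequences whose Fourier series
satisfy `v̂ = ψ·û` with `ψ(ξ) = f(ψ_R(ξ))`, then `u = 0`. -/
theorem subordinated_discrete_levy_ucp
    (n : ℕ) (hn : 1 ≤ n)
    (p : (Fin n → ℤ) → ℝ)
    (hp0 : p 0 = 0) (hpnn : ∀ ℓ, 0 ≤ p ℓ) (hple : ∀ ℓ, p ℓ ≤ 1)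
    (hpsum : Summable p) (hp1 : ∑' ℓ, p ℓ = 1)
    (hnd : Submodule.span ℝ
      ((fun ℓ : Fin n → ℤ => fun i => (ℓ i : ℝ)) '' {ℓ | 0 < p ℓ}) = ⊤)
    (β : ℝ) (hβ : 0 ≤ β)
    (ρ : Measure ℝ) (hρsupp : ρ (Set.Iic 0) = 0)
    (hρint : ∫⁻ s in Set.Ioi (0 : ℝ), ENNReal.ofReal (min s 1) ∂ρ < ⊤)
    (hnoexp : ∀ α : ℝ, 0 < α →
      ∫⁻ s in Set.Ioi (1 : ℝ), ENNReal.ofReal (Real.exp (α * s)) ∂ρ = ⊤)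
    (f : ℂ → ℂ)
    (hf : ∀ z : ℂ, 0 ≤ z.re →
      f z = (β : ℂ) * z + ∫ s in Set.Ioi (0 : ℝ), (1 - Complex.exp (-(z * s))) ∂ρ)
    (ψR : (Fin n → ℝ) → ℂ)
    (hψR : ∀ ξ : Fin n → ℝ, ψR ξ =
      ∑' ℓ : Fin n → ℤ, (p ℓ : ℂ) * (1 - Complex.exp (Complex.I * ∑ i, (ℓ i : ℂ) * (ξ i : ℂ))))
    (u v : (Fin n → ℤ) → ℂ)
    (hufin : (Function.support u).Finite) (hvfin : (Function.support v).Finite)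
    (heq : ∀ ξ : Fin n → ℝ,
      ∑' k : Fin n → ℤ, v k * Complex.exp (Complex.I * ∑ i, (k i : ℂ) * (ξ i : ℂ))
        = f (ψR ξ) * ∑' k : Fin n → ℤ, u k * Complex.exp (Complex.I * ∑ i, (k i : ℂ) * (ξ i : ℂ))) :
    u = 0 := by
  obtain ⟨η, hη⟩ := exists_injective_linear_form n
  set X : (Fin n → ℤ) → ℝ := fun ℓ => ∑ i, (ℓ i : ℝ) * η i with hX
  have hXinj : Function.Injective X := by
    intro k l hkl
    refine sub_eq_zero.mp (hη (k - l) ?_)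
    simpa [sub_mul, sub_eq_zero] using hkl
  have hphase : ∀ (ℓ : Fin n → ℤ) (t : ℝ),
      cexp (I * ∑ i, (ℓ i : ℂ) * ((t • η) i : ℂ)) = cexp (X ℓ * t * I) := by
    intro ℓ t
    congr 1
    simp only [hX, Pi.smul_apply, smul_eq_mul, ofReal_sum, ofReal_mul, ofReal_intCast,
      Finset.mul_sum, Finset.sum_mul]
    exact Finset.sum_congr rfl fun i _ => by ring
  let ν : Measure ℝ := ρ.restrict (Set.Ioi 0)
  have hν : ∀ᵐ s ∂ν, 0 < s := ae_restrict_mem measurableSet_Ioi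
  have hν1 : ν.restrict (Set.Ioi 1) = ρ.restrict (Set.Ioi 1) := by
    rw [Measure.restrict_restrict measurableSet_Ioi,
      Set.inter_eq_left.mpr (Set.Ioi_subset_Ioi zero_le_one)]
  let P : Measure ℝ := Measure.sum fun ℓ => ENNReal.ofReal (p ℓ) • Measure.dirac (X ℓ)
  have hPprob : IsProbabilityMeasure P := by
    refine ⟨?_⟩
    simp [P, ← ENNReal.ofReal_tsum_of_nonneg hpnn hpsum, hp1]
  have hP0 : P {0}ᶜ ≠ 0 := by
    obtain ⟨ℓ, hℓ⟩ : ∃ ℓ, p ℓ ≠ 0 := by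
      by_contra! h
      simp [h] at hp1
    have hℓ0 : X ℓ ≠ 0 := fun h => hℓ (by rw [hη ℓ h, hp0])
    have hpos : 0 < p ℓ := lt_of_le_of_ne (hpnn ℓ) hℓ.symm
    refine (lt_of_lt_of_le ?_ (Measure.le_sum (fun ℓ => ENNReal.ofReal (p ℓ) •
      Measure.dirac (X ℓ)) ℓ {0}ᶜ)).ne'
    simp [hℓ0, hpos]
  have hsummable : ∀ t : ℝ, Summable fun ℓ => (p ℓ : ℂ) * cexp (X ℓ * t * I) := by
    intro t
    refine Summable.of_norm (hpsum.congr fun ℓ => ?_)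
    rw [norm_mul, norm_real, Real.norm_of_nonneg (hpnn ℓ), ← ofReal_mul, norm_exp_ofReal_mul_I,
      mul_one]
  have hψ : ∀ t : ℝ, ψR (t • η) = 1 - charFun P t := by
    intro t
    have h1 : ∑' ℓ, (p ℓ : ℂ) = 1 := by rw [← ofReal_tsum, hp1, ofReal_one]
    have h2 : charFun P t = ∑' ℓ, (p ℓ : ℂ) * cexp (X ℓ * t * I) := by
      rw [charFun_apply_real, integral_sum_dirac fun _ => ENNReal.ofReal_ne_top]
      refine tsum_congr fun ℓ => ?_
      rw [ENNReal.toReal_ofReal (hpnn ℓ), real_smul, mul_comm (t : ℂ)]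
    have hpC : Summable fun ℓ => (p ℓ : ℂ) := ofRealCLM.summable hpsum
    calc ψR (t • η) = ∑' ℓ, ((p ℓ : ℂ) - p ℓ * cexp (X ℓ * t * I)) := by
          rw [hψR]
          refine tsum_congr fun ℓ => ?_
          rw [hphase, mul_sub, mul_one]
      _ = 1 - charFun P t := by rw [hpC.tsum_sub (hsummable t), h1, h2]
  have hfψ : ∀ t : ℝ, charFun (subordinatedLevyMeasure P β ν) t
      = (β + ∫ s, (1 - Real.exp (-s)) ∂ν : ℝ) - f (ψR (t • η)) := by
    intro t
    rw [charFun_subordinatedLevyMeasure hν hρint P hβ, hψ, hf]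
    rw [sub_re, one_re, sub_nonneg]
    exact (re_le_norm _).trans (norm_charFun_le_one t)
  have := isFiniteMeasure_subordinatedLevyMeasure hν hρint P β
  let E : ((Fin n → ℤ) → ℂ) → ℝ → ℂ := fun w t => ∑' k, w k * cexp (X k * t * I)
  have hE : ∀ w : (Fin n → ℤ) → ℂ, ∀ hw : (Function.support w).Finite,
      E w = fun t : ℝ => ∑ k ∈ hw.toFinset, w k * cexp (X k * t * I) := by
    intro w hw
    funext t
    refine tsum_eq_sum fun k hk => ?_
    have : w k = 0 := by simpa using hk
    rw [this, zero_mul]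
  have hEan : ∀ w : (Fin n → ℤ) → ℂ, (Function.support w).Finite → ∀ t, AnalyticAt ℝ (E w) t := by
    intro w hw t
    rw [hE w hw]
    refine Finset.analyticAt_fun_sum _ fun k _ => analyticAt_const.mul ?_
    exact analyticAt_cexp.restrictScalars.comp
      ((analyticAt_const.mul (ofRealCLM.analyticAt t)).mul analyticAt_const)
  have hVU : ∀ t, E v t = f (ψR (t • η)) * E u t := fun t => by
    simpa only [hphase] using heq (t • η)
  by_contra hu
  have hU0 : ¬ ∀ᶠ t in 𝓝 (0 : ℝ), E u t = 0 := by
    intro h0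
    have hzero : E u = 0 :=
      AnalyticOnNhd.eq_of_eventuallyEq (fun t _ => hEan u hufin t)
        (fun t _ => analyticAt_const) h0
    have hli := linearIndependent_cexp_mul_I.comp X hXinj
    refine hu (funext fun k => ?_)
    by_contra hk
    refine hk (linearIndependent_iff'.mp hli hufin.toFinset u ?_ k (by simpa using hk))
    rw [← hzero, hE u hufin]
    funext t
    simp
  have han : AnalyticAt ℝ (fun t : ℝ => f (ψR (t • η))) 0 := by
    refine (hEan u hufin 0).of_mul_eq (hEan v hvfin 0) ?_ hU0 (Eventually.of_forall hVU)
    have : (fun t : ℝ => f (ψR (t • η))) = fun t => ((β + ∫ s, (1 - Real.exp (-s)) ∂ν : ℝ) : ℂ)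
        - charFun (subordinatedLevyMeasure P β ν) t := funext fun t => by rw [hfψ]; ring
    rw [this]
    exact (continuous_const.sub continuous_charFun).continuousAt
  have hchar : AnalyticAt ℝ (charFun (subordinatedLevyMeasure P β ν)) 0 := by
    rw [funext hfψ]
    exact analyticAt_const.sub han
  obtain ⟨δ, hδ, hlt⟩ := hchar.exists_lintegral_cosh_lt_top
  refine hlt.ne (lintegral_cosh_subordinatedLevyMeasure hν P hP0 β (fun α hα => ?_) hδ.ne')
  rw [hν1]
  exact hnoexp α hα
end
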